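/- arXiv:2010.09333 — 9 statements merged into one kernel-verified Lean document; each statement's English description precedes it below -/
import Mathlib

section
/- Let ℓ > 0 and let x¹, x² ∈ S. Let y¹ ∈ S be the unique maximizer over y ∈ S of min_{i=1,…,m}(F_i(x¹) − F_i(y) − (ℓ/2)‖x¹ − y‖²) and y² ∈ S the unique maximizer over y ∈ S of min_{i=1,…,m}(F_i(x²) − F_i(y) − (ℓ/2)‖x² − y‖²). Then ‖y¹ − y²‖ ≤ (1/2)‖x¹ − x²‖ + √( (1/4)‖x¹ − x²‖² + (2/ℓ) max_{i=1,…,m} |F_i(x¹) − F_i(x²)| ). -/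
theorem aux_norm {E : Type*} [NormedAddCommGroup E] [InnerProductSpace ℝ E] (x a b : E) (t : ℝ) :
    ‖x - ((1 - t) • a + t • b)‖ ^ 2
      = (1 - t) * ‖x - a‖ ^ 2 + t * ‖x - b‖ ^ 2 - t * (1 - t) * ‖a - b‖ ^ 2 := by
  have h1 : x - ((1 - t) • a + t • b) = (1 - t) • (x - a) + t • (x - b) := by module
  have h2 : a - b = (x - b) - (x - a) := by abel
  rw [h1, h2]
  generalize x - a = u
  generalize x - b = v
  rw [norm_add_sq_real, norm_sub_sq_real, norm_smul, norm_smul, mul_pow, mul_pow,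
    Real.norm_eq_abs, Real.norm_eq_abs, sq_abs, sq_abs, real_inner_smul_left,
    real_inner_smul_right, real_inner_comm u v]
  ring

theorem aux_strong {E : Type*} [NormedAddCommGroup E] [InnerProductSpace ℝ E] {m : ℕ}
    (hm : 0 < m) (S : Set E) (hS : Convex ℝ S) (F : Fin m → E → ℝ)
    (hF : ∀ i, ConvexOn ℝ Set.univ (F i)) (ℓ : ℝ) (hℓ : 0 < ℓ) (x a b : E)
    (ha : a ∈ S) (hb : b ∈ S)
    (hmax : ∀ y ∈ S,
      (⨅ i, (F i x - F i y - ℓ / 2 * ‖x - y‖ ^ 2)) ≤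
        ⨅ i, (F i x - F i a - ℓ / 2 * ‖x - a‖ ^ 2)) :
    ℓ / 2 * ‖a - b‖ ^ 2 ≤ (⨅ i, (F i x - F i a - ℓ / 2 * ‖x - a‖ ^ 2)) -
      ⨅ i, (F i x - F i b - ℓ / 2 * ‖x - b‖ ^ 2) := by
  haveI : Nonempty (Fin m) := ⟨⟨0, hm⟩⟩
  have key : ∀ t : ℝ, 0 < t → t < 1 → (1 - t) * (ℓ / 2 * ‖a - b‖ ^ 2) ≤
      (⨅ i, (F i x - F i a - ℓ / 2 * ‖x - a‖ ^ 2)) -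
      ⨅ i, (F i x - F i b - ℓ / 2 * ‖x - b‖ ^ 2) := by
    intro t h0 h1
    have hy := hmax ((1 - t) • a + t • b) (hS ha hb (by linarith) h0.le (by ring))
    have hlow : (1 - t) * (⨅ i, (F i x - F i a - ℓ / 2 * ‖x - a‖ ^ 2))
        + t * (⨅ i, (F i x - F i b - ℓ / 2 * ‖x - b‖ ^ 2))
        + t * ((1 - t) * (ℓ / 2 * ‖a - b‖ ^ 2)) ≤
        ⨅ i, (F i x - F i ((1 - t) • a + t • b) - ℓ / 2 * ‖x - ((1 - t) • a + t • b)‖ ^ 2) := by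
      apply le_ciInf
      intro i
      have e1 := ciInf_le (Set.finite_range
        (fun i => F i x - F i a - ℓ / 2 * ‖x - a‖ ^ 2)).bddBelow i
      have e2 := ciInf_le (Set.finite_range
        (fun i => F i x - F i b - ℓ / 2 * ‖x - b‖ ^ 2)).bddBelow i
      have e3 := (hF i).2 (Set.mem_univ a) (Set.mem_univ b) (by linarith : 0 ≤ 1 - t) h0.le
        (by ring)
      simp only [smul_eq_mul] at e1 e2 e3
      have e4 := mul_le_mul_of_nonneg_left e1 (by linarith : 0 ≤ 1 - t)
      have e5 := mul_le_mul_of_nonneg_left e2 h0.le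
      rw [aux_norm]
      linarith
    have := hlow.trans hy
    refine le_of_mul_le_mul_left ?_ h0
    linarith
  set A := ℓ / 2 * ‖a - b‖ ^ 2 with hA
  have hA0 : 0 ≤ A := by positivity
  clear_value A
  generalize (⨅ i, (F i x - F i a - ℓ / 2 * ‖x - a‖ ^ 2)) -
      (⨅ i, (F i x - F i b - ℓ / 2 * ‖x - b‖ ^ 2)) = B at key ⊢
  by_contra! hlt
  have hh := key (1 / 2) (by norm_num) (by norm_num)
  have hApos : 0 < A := by linarith
  have := key ((A - B) / (2 * A)) (by apply div_pos <;> linarith)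
    (by rw [div_lt_one] <;> linarith)
  have e : (1 - (A - B) / (2 * A)) * A = (A + B) / 2 := by field_simp; ring
  linarith

theorem aux_diff {E : Type*} [NormedAddCommGroup E] {m : ℕ}
    (hm : 0 < m) (F : Fin m → E → ℝ) (ℓ M : ℝ) (x z y : E)
    (hM : ∀ i, |F i x - F i z| ≤ M) :
    (⨅ i, (F i x - F i y - ℓ / 2 * ‖x - y‖ ^ 2)) - M + ℓ / 2 * ‖x - y‖ ^ 2
      - ℓ / 2 * ‖z - y‖ ^ 2 ≤ ⨅ i, (F i z - F i y - ℓ / 2 * ‖z - y‖ ^ 2) := by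
  haveI : Nonempty (Fin m) := ⟨⟨0, hm⟩⟩
  apply le_ciInf
  intro i
  have e1 := ciInf_le (Set.finite_range
    (fun i => F i x - F i y - ℓ / 2 * ‖x - y‖ ^ 2)).bddBelow i
  have e2 := (abs_le.1 (hM i)).2
  linarith

/-- Hölder-type estimate between the maximizers `y¹, y²` associated with the
regularized merit function at two points `x¹, x²`. -/
theorem maximizer_dist_estimate {n m : ℕ} (hm : 0 < m)
    (S : Set (EuclideanSpace ℝ (Fin n))) (hS : S.Nonempty)
    (hSclosed : IsClosed S) (hSconv : Convex ℝ S)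
    (F : Fin m → EuclideanSpace ℝ (Fin n) → ℝ)
    (hFconv : ∀ i, ConvexOn ℝ Set.univ (F i))
    (ℓ : ℝ) (hℓ : 0 < ℓ)
    (x1 x2 y1 y2 : EuclideanSpace ℝ (Fin n))
    (hx1 : x1 ∈ S) (hx2 : x2 ∈ S) (hy1 : y1 ∈ S) (hy2 : y2 ∈ S)
    (hy1max : ∀ y ∈ S,
      (⨅ i, (F i x1 - F i y - ℓ / 2 * ‖x1 - y‖ ^ 2)) ≤
        ⨅ i, (F i x1 - F i y1 - ℓ / 2 * ‖x1 - y1‖ ^ 2))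
    (hy2max : ∀ y ∈ S,
      (⨅ i, (F i x2 - F i y - ℓ / 2 * ‖x2 - y‖ ^ 2)) ≤
        ⨅ i, (F i x2 - F i y2 - ℓ / 2 * ‖x2 - y2‖ ^ 2)) :
    ‖y1 - y2‖ ≤ 1 / 2 * ‖x1 - x2‖ +
      Real.sqrt (1 / 4 * ‖x1 - x2‖ ^ 2 + 2 / ℓ * ⨆ i, |F i x1 - F i x2|) := by
  have hM : ∀ i, |F i x1 - F i x2| ≤ ⨆ i, |F i x1 - F i x2| := fun i =>
    le_ciSup (Set.finite_range (fun i => |F i x1 - F i x2|)).bddAbove i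
  have hM0 := (abs_nonneg _).trans (hM ⟨0, hm⟩)
  generalize (⨆ i, |F i x1 - F i x2|) = M at hM hM0 ⊢
  have s1 := aux_strong hm S hSconv F hFconv ℓ hℓ x1 y1 y2 hy1 hy2 hy1max
  have s2 := aux_strong hm S hSconv F hFconv ℓ hℓ x2 y2 y1 hy2 hy1 hy2max
  have d1 := aux_diff hm F ℓ M x1 x2 y1 hM
  have d2 := aux_diff hm F ℓ M x2 x1 y2 (fun i => by rw [abs_sub_comm]; exact hM i)
  rw [norm_sub_rev y2 y1] at s2
  have hid : ‖x2 - y1‖ ^ 2 - ‖x1 - y1‖ ^ 2 + ‖x1 - y2‖ ^ 2 - ‖x2 - y2‖ ^ 2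
      = 2 * inner ℝ (x1 - x2) (y1 - y2) := by
    simp only [norm_sub_sq_real, inner_sub_left, inner_sub_right]
    ring
  have hcs := real_inner_le_norm (x1 - x2) (y1 - y2)
  have hmain : ℓ * ‖y1 - y2‖ ^ 2 ≤ 2 * M + ℓ * (‖x1 - x2‖ * ‖y1 - y2‖) := by
    have := mul_le_mul_of_nonneg_left hcs hℓ.le
    have h3 := congrArg (fun r => ℓ / 2 * r) hid
    linarith
  generalize ‖y1 - y2‖ = d at hmain ⊢
  generalize ‖x1 - x2‖ = D at hmain ⊢
  have h4 : d ^ 2 ≤ 2 / ℓ * M + D * d := by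
    refine le_of_mul_le_mul_left ?_ hℓ
    have : ℓ * (2 / ℓ * M + D * d) = 2 * M + ℓ * (D * d) := by field_simp
    linarith
  have h5 : d - 1 / 2 * D ≤ Real.sqrt (1 / 4 * D ^ 2 + 2 / ℓ * M) := by
    apply Real.le_sqrt_of_sq_le
    linarith
  linarith
end

section
/- For every ℓ > 0, the function u_ℓ is continuous on S. -/
/-- The regularized merit function
`u_ℓ(x) = max_{y ∈ S} min_i (F i x - F i y - (ℓ/2)‖x - y‖²)`. -/
noncomputable def meritU {n m : ℕ} (ℓ : ℝ) (S : Set (EuclideanSpace ℝ (Fin n)))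
    (F : Fin m → EuclideanSpace ℝ (Fin n) → ℝ)
    (x : EuclideanSpace ℝ (Fin n)) : ℝ :=
  sSup ((fun y => ⨅ i, (F i x - F i y - ℓ / 2 * ‖x - y‖ ^ 2)) '' S)

/-- for every `ℓ > 0`, `u_ℓ` is continuous on `S`. -/
theorem meritU_continuousOn {n m : ℕ} (hm : 0 < m)
    (S : Set (EuclideanSpace ℝ (Fin n))) (hS : S.Nonempty)
    (hSclosed : IsClosed S) (hSconv : Convex ℝ S)
    (F : Fin m → EuclideanSpace ℝ (Fin n) → ℝ)
    (hFconv : ∀ i, ConvexOn ℝ Set.univ (F i))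
    (ℓ : ℝ) (hℓ : 0 < ℓ) :
    ContinuousOn (meritU ℓ S F) S := by
  have hFc : ∀ i, Continuous (F i) := fun i =>
    continuousOn_univ.1 ((hFconv i).continuousOn isOpen_univ)
  have : Nonempty (Fin m) := ⟨⟨0, hm⟩⟩
  let i0 : Fin m := ⟨0, hm⟩
  let f : EuclideanSpace ℝ (Fin n) → EuclideanSpace ℝ (Fin n) → ℝ :=
    fun x y => ⨅ i, (F i x - F i y - ℓ / 2 * ‖x - y‖ ^ 2)
  have hf : Continuous (Function.uncurry f) := by
    have : Function.uncurry f = fun p => Finset.univ.inf' Finset.univ_nonempty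
        (fun i => F i p.1 - F i p.2 - ℓ / 2 * ‖p.1 - p.2‖ ^ 2) := by
      funext p
      rw [Finset.inf'_univ_eq_ciInf]
      rfl
    rw [this]
    apply Continuous.finset_inf'_apply
    intro i _
    have h1 := (hFc i).comp (continuous_fst (X := EuclideanSpace ℝ (Fin n)) (Y := EuclideanSpace ℝ (Fin n)))
    have h2 := (hFc i).comp (continuous_snd (X := EuclideanSpace ℝ (Fin n)) (Y := EuclideanSpace ℝ (Fin n)))
    simp only [Function.comp_def] at h1 h2
    fun_prop
  intro x0 hx0
  obtain ⟨M, hM⟩ := (isCompact_closedBall x0 2).exists_bound_of_continuousOn (hFc i0).continuousOn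
  have hM0 : 0 ≤ M := (norm_nonneg _).trans (hM x0 (by simp))
  let R : ℝ := 2 + 4 * M / ℓ
  have hq : 0 ≤ 4 * M / ℓ := by positivity
  have hK : IsCompact (S ∩ Metric.closedBall x0 R) := (isCompact_closedBall x0 R).inter_left hSclosed
  have hg : Continuous fun x => sSup (f x '' (S ∩ Metric.closedBall x0 R)) :=
    hK.continuous_sSup hf
  have hfxx : ∀ x, f x x = 0 := by
    intro x
    simp [f]
  have far : ∀ x y, dist x x0 ≤ 1 → R < dist y x0 → f x y ≤ 0 := by
    intro x y hx hy
    have hle : f x y ≤ F i0 x - F i0 y - ℓ / 2 * ‖x - y‖ ^ 2 :=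
      ciInf_le (Set.finite_range _).bddBelow i0
    refine hle.trans ?_
    have hd : 1 + 4 * M / ℓ < ‖x - y‖ := by
      have := dist_triangle y x x0
      rw [dist_comm y x, dist_eq_norm x y] at this
      simp only [R] at hy
      linarith
    set d := ‖x - y‖ with hdd
    have hd1 : 1 < d := by linarith
    have hd0 : 0 < d := by linarith
    have hinv : d⁻¹ ≤ 1 := inv_le_one_of_one_le₀ hd1.le
    have hc := (hFconv i0).2 (Set.mem_univ x) (Set.mem_univ y)
      (show 0 ≤ 1 - d⁻¹ by linarith) (show 0 ≤ d⁻¹ by positivity) (by ring)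
    set z := (1 - d⁻¹) • x + d⁻¹ • y with hz
    have hzx : dist z x ≤ 1 := by
      have : z - x = d⁻¹ • (y - x) := by rw [hz]; module
      rw [dist_eq_norm, this, norm_smul, norm_sub_rev, ← hdd, Real.norm_of_nonneg (by positivity),
        inv_mul_cancel₀ hd0.ne']
    have hFz := hM z (by
      rw [Metric.mem_closedBall]
      linarith [dist_triangle z x x0])
    have hFx := hM x (by
      rw [Metric.mem_closedBall]
      linarith)
    rw [Real.norm_eq_abs, abs_le] at hFz hFx
    simp only [smul_eq_mul] at hc
    have hc2 : d * F i0 z ≤ (d - 1) * F i0 x + F i0 y := by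
      have := mul_le_mul_of_nonneg_left hc hd0.le
      have e : d * ((1 - d⁻¹) * F i0 x + d⁻¹ * F i0 y) = (d - 1) * F i0 x + F i0 y := by
        field_simp
      linarith
    have h4 : 4 * M < ℓ * d := by
      have : 4 * M / ℓ < d := by linarith
      rw [div_lt_iff₀ hℓ] at this
      linarith
    have h5 : d * (F i0 x - F i0 z) ≤ d * (2 * M) :=
      mul_le_mul_of_nonneg_left (by linarith [hFz.1, hFx.2]) hd0.le
    have h6 : d * (4 * M) ≤ d * (ℓ * d) := mul_le_mul_of_nonneg_left h4.le hd0.le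
    nlinarith
  refine hg.continuousWithinAt.congr_of_eventuallyEq_of_mem ?_ hx0
  filter_upwards [self_mem_nhdsWithin, mem_nhdsWithin_of_mem_nhds (Metric.closedBall_mem_nhds x0 one_pos)]
    with x hxS hx1
  rw [Metric.mem_closedBall] at hx1
  have hbdd : BddAbove (f x '' (S ∩ Metric.closedBall x0 R)) :=
    (hK.image (hf.comp (Continuous.prodMk_right x))).bddAbove
  have hxK : x ∈ S ∩ Metric.closedBall x0 R := ⟨hxS, by
    rw [Metric.mem_closedBall]
    simp only [R]
    linarith⟩
  have hub : ∀ a ∈ f x '' S, a ≤ sSup (f x '' (S ∩ Metric.closedBall x0 R)) := by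
    rintro _ ⟨y, hy, rfl⟩
    by_cases hyR : dist y x0 ≤ R
    · exact le_csSup hbdd ⟨y, ⟨hy, hyR⟩, rfl⟩
    · exact (far x y hx1 (not_le.1 hyR)).trans
        ((hfxx x).symm.le.trans (le_csSup hbdd ⟨x, hxK, rfl⟩))
  change sSup (f x '' S) = _
  apply le_antisymm
  · exact csSup_le (hS.image _) hub
  · exact csSup_le_csSup ⟨_, hub⟩ ⟨_, x, hxK, rfl⟩ (Set.image_mono Set.inter_subset_left)
end

section
/- Fix x ∈ S and ℓ > 0. Define φ on the positive orthant of ℝᵐ by φ(λ) = Σ_{i=1}^m λ_i F_i(x) − inf_{y∈S} ( Σ_{i=1}^m λ_i F_i(y) + (ℓ/2)‖x − y‖² ). Then φ is differentiable at every λ ∈ ℝᵐ with λ_i > 0 for all i, and its gradient is given componentwise by (∇φ(λ))_i = F_i(x) − F_i(p(λ)), where p(λ) ∈ S is the unique minimizer over y ∈ S of Σ_{i=1}^m λ_i F_i(y) + (ℓ/2)‖x − y‖². -/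
theorem aux_convex {n m : ℕ}
    (F : Fin m → EuclideanSpace ℝ (Fin n) → ℝ)
    (hFconv : ∀ i, ConvexOn ℝ Set.univ (F i))
    (ℓ : ℝ) (x q y : EuclideanSpace ℝ (Fin n))
    (t : Fin m → ℝ) (ht : ∀ i, 0 < t i) (a b : ℝ) (ha : 0 ≤ a) (hb : 0 ≤ b) (hab : a + b = 1) :
    (∑ i, t i * F i (a • q + b • y)) + ℓ / 2 * ‖x - (a • q + b • y)‖ ^ 2 ≤
      a * ((∑ i, t i * F i q) + ℓ / 2 * ‖x - q‖ ^ 2) +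
      b * ((∑ i, t i * F i y) + ℓ / 2 * ‖x - y‖ ^ 2) - ℓ / 2 * (a * b * ‖q - y‖ ^ 2) := by
  have h1 : (∑ i, t i * F i (a • q + b • y)) ≤
      a * (∑ i, t i * F i q) + b * (∑ i, t i * F i y) := by
    rw [Finset.mul_sum, Finset.mul_sum, ← Finset.sum_add_distrib]
    refine Finset.sum_le_sum fun i _ => ?_
    have := (hFconv i).2 (Set.mem_univ q) (Set.mem_univ y) ha hb hab
    simp only [smul_eq_mul] at this
    nlinarith [mul_le_mul_of_nonneg_left this (ht i).le]
  have h2 : ‖x - (a • q + b • y)‖ ^ 2 =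
      a * ‖x - q‖ ^ 2 + b * ‖x - y‖ ^ 2 - a * b * ‖q - y‖ ^ 2 := by
    have e1 : x - (a • q + b • y) = a • (x - q) + b • (x - y) := by
      obtain rfl : a = 1 - b := by linarith
      module
    have e2 : q - y = (x - y) - (x - q) := by abel
    rw [e1, e2, norm_add_sq_real, norm_sub_sq_real (x - y) (x - q), norm_smul, norm_smul,
      real_inner_smul_left, real_inner_smul_right, real_inner_comm (x - q) (x - y),
      mul_pow, mul_pow, Real.norm_eq_abs, Real.norm_eq_abs, sq_abs, sq_abs]
    obtain rfl : a = 1 - b := by linarith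
    ring
  rw [h2]
  linarith

theorem aux_pert {m : ℕ} (s u : Fin m → ℝ) (M : ℝ) (hu : ∀ i, |u i| ≤ M) :
    |∑ i, s i * u i| ≤ m * M * ‖s‖ := by
  calc |∑ i, s i * u i| ≤ ∑ i, |s i * u i| := Finset.abs_sum_le_sum_abs _ _
    _ ≤ ∑ _i : Fin m, ‖s‖ * M := by
        refine Finset.sum_le_sum fun i _ => ?_
        rw [abs_mul]
        exact mul_le_mul (norm_le_pi_norm s i) (hu i) (abs_nonneg _) (norm_nonneg _)
    _ = m * M * ‖s‖ := by simp; ring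


/-- the dual objective
`φ(λ) = Σ_i λ_i F_i(x) - inf_{y ∈ S} (Σ_i λ_i F_i(y) + (ℓ/2)‖x - y‖²)`
is differentiable at every `λ` with `λ_i > 0` for all `i`, with gradient whose `i`-th
component is `F_i(x) - F_i(p(λ))`, where `p(λ)` is the unique minimizer over `S` of
`y ↦ Σ_i λ_i F_i(y) + (ℓ/2)‖x - y‖²`. -/
theorem dual_objective_hasFDerivAt {n m : ℕ} (hm : 0 < m)
    (S : Set (EuclideanSpace ℝ (Fin n))) (hS : S.Nonempty)
    (hSclosed : IsClosed S) (hSconv : Convex ℝ S)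
    (F : Fin m → EuclideanSpace ℝ (Fin n) → ℝ)
    (hFconv : ∀ i, ConvexOn ℝ Set.univ (F i))
    (ℓ : ℝ) (hℓ : 0 < ℓ)
    (x : EuclideanSpace ℝ (Fin n)) (hx : x ∈ S)
    (p : (Fin m → ℝ) → EuclideanSpace ℝ (Fin n))
    (hpmem : ∀ lam : Fin m → ℝ, (∀ i, 0 < lam i) → p lam ∈ S)
    (hpmin : ∀ lam : Fin m → ℝ, (∀ i, 0 < lam i) → ∀ y ∈ S,
      (∑ i, lam i * F i (p lam)) + ℓ / 2 * ‖x - p lam‖ ^ 2 ≤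
        (∑ i, lam i * F i y) + ℓ / 2 * ‖x - y‖ ^ 2)
    (lam : Fin m → ℝ) (hlam : ∀ i, 0 < lam i) :
    HasFDerivAt
      (fun t : Fin m → ℝ =>
        (∑ i, t i * F i x) -
          sInf ((fun y => (∑ i, t i * F i y) + ℓ / 2 * ‖x - y‖ ^ 2) '' S))
      (∑ i, (F i x - F i (p lam)) •
        (ContinuousLinearMap.proj i : (Fin m → ℝ) →L[ℝ] ℝ))
      lam := by
  have hFc : ∀ i, Continuous (F i) := fun i =>
    continuousOn_univ.1 ((hFconv i).continuousOn isOpen_univ)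
  have hpos : ∀ᶠ t in nhds lam, ∀ i, 0 < t i := by
    rw [Filter.eventually_all]
    intro i
    exact (continuous_apply i).continuousAt.eventually (lt_mem_nhds (hlam i))
  -- continuity of the minimizer
  have hpc : ContinuousAt p lam := by
    rw [Metric.continuousAt_iff']
    intro ε hε
    set q := p lam with hq
    obtain ⟨M, hM⟩ : ∃ M, ∀ z ∈ Metric.closedBall q ε, ∀ i, |F i z - F i q| ≤ M := by
      have hc : Continuous (fun z => (fun i => F i z - F i q : Fin m → ℝ)) :=
        continuous_pi fun i => (hFc i).sub continuous_const
      obtain ⟨M, hM⟩ := (isCompact_closedBall q ε).exists_bound_of_continuousOn hc.continuousOn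
      exact ⟨M, fun z hz i => (norm_le_pi_norm _ i).trans (hM z hz)⟩
    have hsm : ∀ᶠ t in nhds lam, m * M * ‖t - lam‖ < ℓ / 4 * ε ^ 2 := by
      have hc : Continuous (fun t : Fin m → ℝ => m * M * ‖t - lam‖) := by fun_prop
      refine hc.continuousAt.eventually (gt_mem_nhds ?_)
      simp only [sub_self, norm_zero, mul_zero]
      positivity
    filter_upwards [hpos, hsm] with t ht hts
    by_contra! hd
    set y := p t with hy
    have hdpos : 0 < dist y q := lt_of_lt_of_le hε hd
    have hb0 : 0 ≤ ε / dist y q := by positivity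
    have hb1 : ε / dist y q ≤ 1 := (div_le_one hdpos).2 hd
    set b := ε / dist y q with hb
    set z := (1 - b) • q + b • y with hz
    have hzS : z ∈ S := hSconv (hpmem lam hlam) (hpmem t ht) (by linarith) hb0 (by ring)
    have hzq : ‖z - q‖ = ε := by
      have : z - q = b • (y - q) := by rw [hz]; module
      rw [this, norm_smul, ← dist_eq_norm, Real.norm_of_nonneg hb0, hb]
      field_simp
    have c1 := aux_convex F hFconv ℓ x q y t ht (1 - b) b (by linarith) hb0 (by ring)
    have c2 := hpmin t ht q (hpmem lam hlam)
    have c3 := aux_convex F hFconv ℓ x q z lam hlam (1 / 2) (1 / 2) (by norm_num)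
      (by norm_num) (by norm_num)
    have c4 := hpmin lam hlam ((1 / 2 : ℝ) • q + (1 / 2 : ℝ) • z)
      (hSconv (hpmem lam hlam) hzS (by norm_num) (by norm_num) (by norm_num))
    have c5 := aux_pert (t - lam) (fun i => F i z - F i q) M
      (hM z (by rw [Metric.mem_closedBall, dist_eq_norm, hzq]))
    have c6 : ∑ i, (t - lam) i * (F i z - F i q) =
        (∑ i, t i * F i z) - (∑ i, t i * F i q) - (∑ i, lam i * F i z)
          + ∑ i, lam i * F i q := by
      rw [← Finset.sum_sub_distrib, ← Finset.sum_sub_distrib, ← Finset.sum_add_distrib]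
      refine Finset.sum_congr rfl fun i _ => ?_
      simp only [Pi.sub_apply]
      ring
    rw [c6] at c5
    have c7 := (abs_le.1 c5).1
    rw [norm_sub_rev q z, hzq] at c3
    rw [← hz] at c1
    rw [← hy] at c2
    rw [← hq] at c4
    have c8 : 0 ≤ ℓ / 2 * ((1 - b) * b * ‖q - y‖ ^ 2) := by
      have : 0 ≤ 1 - b := by linarith
      positivity
    have c9 := mul_le_mul_of_nonneg_left c2 hb0
    nlinarith
  have hval : ∀ t : Fin m → ℝ, (∀ i, 0 < t i) →
      sInf ((fun y => (∑ i, t i * F i y) + ℓ / 2 * ‖x - y‖ ^ 2) '' S) =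
        (∑ i, t i * F i (p t)) + ℓ / 2 * ‖x - p t‖ ^ 2 := by
    intro t ht
    refine IsLeast.csInf_eq ⟨⟨p t, hpmem t ht, rfl⟩, ?_⟩
    rintro _ ⟨y, hy, rfl⟩
    exact hpmin t ht y hy
  rw [hasFDerivAt_iff_isLittleO, Asymptotics.isLittleO_iff]
  intro c hc
  have hmpos : (0 : ℝ) < m := by exact_mod_cast hm
  have hFp : ∀ᶠ t in nhds lam, ∀ i, |F i (p t) - F i (p lam)| ≤ c / m := by
    rw [Filter.eventually_all]
    intro i
    have h : ContinuousAt (fun t => F i (p t)) lam :=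
      ContinuousAt.comp (hFc i).continuousAt hpc
    filter_upwards [Metric.continuousAt_iff'.1 h (c / m) (by positivity)] with t ht
    exact ht.le
  filter_upwards [hpos, hFp] with t ht hFt
  have d1 := aux_pert (t - lam) (fun i => F i (p t) - F i (p lam)) (c / m) hFt
  have d0 : (m : ℝ) * (c / m) = c := by field_simp
  rw [d0] at d1
  have d2 := hpmin t ht (p lam) (hpmem lam hlam)
  have d3 := hpmin lam hlam (p t) (hpmem t ht)
  have d4 : ∑ i, (t - lam) i * (F i (p t) - F i (p lam)) =
      (∑ i, t i * F i (p t)) - (∑ i, t i * F i (p lam)) - (∑ i, lam i * F i (p t))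
        + ∑ i, lam i * F i (p lam) := by
    rw [← Finset.sum_sub_distrib, ← Finset.sum_sub_distrib, ← Finset.sum_add_distrib]
    refine Finset.sum_congr rfl fun i _ => ?_
    simp only [Pi.sub_apply]
    ring
  have d5 : (∑ i, (F i x - F i (p lam)) •
        (ContinuousLinearMap.proj i : (Fin m → ℝ) →L[ℝ] ℝ)) (t - lam) =
      (∑ i, t i * F i x) - (∑ i, t i * F i (p lam)) - (∑ i, lam i * F i x)
        + ∑ i, lam i * F i (p lam) := by
    rw [← Finset.sum_sub_distrib, ← Finset.sum_sub_distrib, ← Finset.sum_add_distrib,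
      ContinuousLinearMap.sum_apply]
    refine Finset.sum_congr rfl fun i _ => ?_
    simp only [ContinuousLinearMap.smul_apply, ContinuousLinearMap.proj_apply, Pi.sub_apply,
      smul_eq_mul]
    ring
  rw [d4] at d1
  rw [d5, hval t ht, hval lam hlam, Real.norm_eq_abs, abs_le]
  have d6 := (abs_le.1 d1)
  have d7 : 0 ≤ c * ‖t - lam‖ := by positivity
  constructor <;> linarith [d6.1, d6.2]
end

section
/- Let ℓ > 0 and x ∈ S. Let Λ(x) ⊆ Δᵐ be the set of minimizers over λ ∈ Δᵐ of Σ_{i=1}^m λ_i F_i(x) − inf_{y∈S}( Σ_{i=1}^m λ_i F_i(y) + (ℓ/2)‖x − y‖² ). Then for every z ∈ S, the directional derivative u_ℓ′(x; z − x) exists and u_ℓ′(x; z − x) = inf_{λ∈Λ(x)} { Σ_{i=1}^m λ_i F_i′(x; z − x) − ℓ (x − p(λ))ᵀ(z − x) }, where p(λ) ∈ S is the unique minimizer over y ∈ S of Σ_{i=1}^m λ_i F_i(y) + (ℓ/2)‖x − y‖². -/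
open scoped RealInnerProductSpace

/-- Directional derivative: `h′(x; d) = v` means `(h(x + t d) - h x)/t → v` as `t ↘ 0`. -/
def HasDirDeriv {n : ℕ} (h : EuclideanSpace ℝ (Fin n) → ℝ)
    (x d : EuclideanSpace ℝ (Fin n)) (v : ℝ) : Prop :=
  Filter.Tendsto (fun t : ℝ => (h (x + t • d) - h x) / t)
    (nhdsWithin 0 (Set.Ioi 0)) (nhds v)

/-- The dual objective `ψ(λ) = Σ_i λ_i F_i(x) - inf_{y ∈ S}(Σ_i λ_i F_i(y) + (ℓ/2)‖x-y‖²)`. -/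
noncomputable def dualObjU {n m : ℕ} (ℓ : ℝ) (S : Set (EuclideanSpace ℝ (Fin n)))
    (F : Fin m → EuclideanSpace ℝ (Fin n) → ℝ)
    (x : EuclideanSpace ℝ (Fin n)) (lam : Fin m → ℝ) : ℝ :=
  (∑ i, lam i * F i x) -
    sInf ((fun y => (∑ i, lam i * F i y) + ℓ / 2 * ‖x - y‖ ^ 2) '' S)

theorem alt_aux {V : Type*} [AddCommGroup V] [Module ℝ V] {m : ℕ} (S : Set V) (hS : S.Nonempty)
    (f : Fin m → V → ℝ) (hf : ∀ i, ConvexOn ℝ S (f i)) (hSc : Convex ℝ S)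
    (h : ∀ y ∈ S, ∃ i, 0 ≤ f i y) :
    ∃ lam ∈ stdSimplex ℝ (Fin m), ∀ y ∈ S, 0 ≤ ∑ i, lam i * f i y := by
  classical
  let A : Set (Fin m → ℝ) := {v | ∃ y ∈ S, ∀ i, f i y < v i}
  have hAo : IsOpen A := by
    have : A = ⋃ y ∈ S, Set.pi Set.univ (fun i => Set.Ioi (f i y)) := by
      ext v; simp [A, Set.mem_pi]
    rw [this]
    exact isOpen_biUnion fun y _ => isOpen_set_pi Set.finite_univ fun i _ => isOpen_Ioi
  have hAc : Convex ℝ A := by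
    rintro v ⟨y, hy, hv⟩ w ⟨y', hy', hw⟩ a b ha hb hab
    refine ⟨a • y + b • y', hSc hy hy' ha hb hab, fun i => ?_⟩
    have h1 := (hf i).2 hy hy' ha hb hab
    simp only [smul_eq_mul, Pi.add_apply, Pi.smul_apply] at h1 ⊢
    have := hv i
    have := hw i
    rcases ha.eq_or_lt with rfl | ha'
    · have : b = 1 := by linarith
      subst this; linarith
    · nlinarith
  have h0 : (0 : Fin m → ℝ) ∉ A := by
    rintro ⟨y, hy, hv⟩
    obtain ⟨i, hi⟩ := h y hy
    have := hv i
    simp at this; linarith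
  obtain ⟨L, hL⟩ := geometric_hahn_banach_point_open hAc hAo h0
  rw [map_zero] at hL
  let c : Fin m → ℝ := fun i => L (Pi.single i 1)
  have hLc : ∀ v, L v = ∑ i, c i * v i := by
    intro v
    have := LinearMap.pi_apply_eq_sum_univ (L : (Fin m → ℝ) →ₗ[ℝ] ℝ) v
    simp only [ContinuousLinearMap.coe_coe, smul_eq_mul] at this
    rw [this]
    refine Finset.sum_congr rfl fun i _ => ?_
    rw [mul_comm]
    congr 2
    ext j
    simp [Pi.single_apply, eq_comm]
  have hpos : ∀ y ∈ S, 0 ≤ ∑ i, c i * f i y := by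
    intro y hy
    by_contra hneg
    push Not at hneg
    have key : ∀ e > 0, 0 < ∑ i, c i * f i y + e * ∑ i, c i := by
      intro e he
      have := hL (fun i => f i y + e) ⟨y, hy, fun i => by simp [he]⟩
      rw [hLc] at this
      refine this.trans_eq ?_
      rw [Finset.mul_sum, ← Finset.sum_add_distrib]
      exact Finset.sum_congr rfl fun i _ => by ring
    have k1 := key 1 one_pos
    set P := ∑ i, c i * f i y
    set Q := ∑ i, c i
    have hQ : 0 < Q := by linarith
    have := key (-P / Q) (div_pos (by linarith) hQ)
    rw [div_mul_cancel₀ _ hQ.ne'] at this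
    linarith
  obtain ⟨y0, hy0⟩ := hS
  have hc : ∀ i, 0 ≤ c i := by
    intro i
    by_contra hneg
    push Not at hneg
    set v : Fin m → ℝ := fun i => f i y0 + 1
    have hv : 0 < L v := hL v ⟨y0, hy0, fun i => by simp [v]⟩
    have hs : 0 ≤ L v / (- c i) := div_nonneg hv.le (by linarith)
    have := hL (v + (L v / (- c i)) • Pi.single i 1) ⟨y0, hy0, fun j => by
      have : 0 ≤ (Pi.single i 1 : Fin m → ℝ) j := by
        rw [Pi.single_apply]; split_ifs <;> norm_num
      have := mul_nonneg hs this
      simp only [Pi.add_apply, Pi.smul_apply, smul_eq_mul]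
      have : v j = f j y0 + 1 := rfl
      linarith⟩
    rw [map_add, map_smul, smul_eq_mul] at this
    change 0 < L v + L v / (- c i) * c i at this
    have e : L v / (- c i) * c i = - L v := by
      field_simp [hneg.ne]
    linarith
  have hQ : 0 < ∑ i, c i := by
    refine (Finset.sum_nonneg fun i _ => hc i).lt_of_ne fun h0 => ?_
    have hz := (Finset.sum_eq_zero_iff_of_nonneg fun i _ => hc i).1 h0.symm
    have := hL (fun i => f i y0 + 1) ⟨y0, hy0, fun i => by simp⟩
    rw [hLc, Finset.sum_eq_zero] at this
    · exact lt_irrefl _ this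
    · intro i hi; rw [hz i hi, zero_mul]
  refine ⟨fun i => c i / ∑ j, c j, ⟨fun i => div_nonneg (hc i) hQ.le, ?_⟩, fun y hy => ?_⟩
  · rw [← Finset.sum_div, div_self hQ.ne']
  · have := div_nonneg (hpos y hy) hQ.le
    rw [Finset.sum_div] at this
    exact this.trans_eq (Finset.sum_congr rfl fun i _ => by ring)

theorem strong_aux {n m : ℕ} (S : Set (EuclideanSpace ℝ (Fin n))) (hSconv : Convex ℝ S)
    (F : Fin m → EuclideanSpace ℝ (Fin n) → ℝ)
    (hFconv : ∀ i, ConvexOn ℝ Set.univ (F i)) (ℓ : ℝ) 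
    (x q : EuclideanSpace ℝ (Fin n)) (hq : q ∈ S) (lam : Fin m → ℝ)
    (hl : lam ∈ stdSimplex ℝ (Fin m))
    (hmin : ∀ y ∈ S, (∑ i, lam i * F i q) + ℓ / 2 * ‖x - q‖ ^ 2 ≤
        (∑ i, lam i * F i y) + ℓ / 2 * ‖x - y‖ ^ 2)
    (y : EuclideanSpace ℝ (Fin n)) (hy : y ∈ S) :
    (∑ i, lam i * F i q) + ℓ / 2 * ‖x - q‖ ^ 2 + ℓ / 2 * ‖y - q‖ ^ 2 ≤
        (∑ i, lam i * F i y) + ℓ / 2 * ‖x - y‖ ^ 2 := by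
  have key : ∀ s ∈ Set.Ioo (0:ℝ) 1, (∑ i, lam i * F i q) + ℓ / 2 * ‖x - q‖ ^ 2 
      + ℓ / 2 * (1 - s) * ‖y - q‖ ^ 2 ≤ (∑ i, lam i * F i y) + ℓ / 2 * ‖x - y‖ ^ 2 := by
    rintro s ⟨h0, h1⟩
    have a1 := hmin _ (hSconv hq hy (by linarith : 0 ≤ 1 - s) h0.le (by ring))
    have a2 : ∑ i, lam i * F i ((1 - s) • q + s • y) ≤
        (1 - s) * ∑ i, lam i * F i q + s * ∑ i, lam i * F i y := by
      rw [Finset.mul_sum, Finset.mul_sum, ← Finset.sum_add_distrib]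
      refine Finset.sum_le_sum fun i _ => ?_
      have := (hFconv i).2 (Set.mem_univ q) (Set.mem_univ y) (by linarith : 0 ≤ 1 - s) h0.le
        (by ring)
      simp only [smul_eq_mul] at this
      have := mul_le_mul_of_nonneg_left this (hl.1 i)
      linarith
    have a3 : ‖x - ((1 - s) • q + s • y)‖ ^ 2 = (1 - s) * ‖x - q‖ ^ 2 + s * ‖x - y‖ ^ 2
        - s * (1 - s) * ‖y - q‖ ^ 2 := by
      have e1 : x - ((1 - s) • q + s • y) = (x - q) - s • (y - q) := by module
      have e2 : x - y = (x - q) - (y - q) := by abel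
      rw [e1, e2, norm_sub_sq_real, norm_sub_sq_real (x - q) (y - q), inner_smul_right, norm_smul,
        mul_pow, Real.norm_eq_abs, sq_abs]
      ring
    rw [a3] at a1
    have : s * ((∑ i, lam i * F i q) + ℓ / 2 * ‖x - q‖ ^ 2 
      + ℓ / 2 * (1 - s) * ‖y - q‖ ^ 2) ≤ s * ((∑ i, lam i * F i y) + ℓ / 2 * ‖x - y‖ ^ 2) := by
      linarith
    exact le_of_mul_le_mul_left this h0
  have ht : Filter.Tendsto (fun s : ℝ => (∑ i, lam i * F i q) + ℓ / 2 * ‖x - q‖ ^ 2 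
      + ℓ / 2 * (1 - s) * ‖y - q‖ ^ 2) (nhdsWithin 0 (Set.Ioi 0)) (nhds ((∑ i, lam i * F i q) + 
      ℓ / 2 * ‖x - q‖ ^ 2 + ℓ / 2 * (1 - 0) * ‖y - q‖ ^ 2)) := by
    refine Filter.Tendsto.mono_left (Continuous.tendsto (by fun_prop) 0) nhdsWithin_le_nhds
  have := le_of_tendsto ht (Filter.eventually_of_mem (Ioo_mem_nhdsGT one_pos) key)
  simpa using this

theorem merit_le_aux {n m : ℕ} (ℓ : ℝ) (S : Set (EuclideanSpace ℝ (Fin n))) (hS : S.Nonempty)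
    (F : Fin m → EuclideanSpace ℝ (Fin n) → ℝ)
    (x : EuclideanSpace ℝ (Fin n)) (lam : Fin m → ℝ) (hl : lam ∈ stdSimplex ℝ (Fin m)) (C : ℝ)
    (h : ∀ y ∈ S, (∑ i, lam i * F i x) - ((∑ i, lam i * F i y) + ℓ / 2 * ‖x - y‖ ^ 2) ≤ C) :
    BddAbove ((fun y => ⨅ i, (F i x - F i y - ℓ / 2 * ‖x - y‖ ^ 2)) '' S) ∧
    meritU ℓ S F x ≤ C := by
  have key : ∀ w ∈ ((fun y => ⨅ i, (F i x - F i y - ℓ / 2 * ‖x - y‖ ^ 2)) '' S), w ≤ C := by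
    rintro _ ⟨y, hy, rfl⟩
    refine le_trans ?_ (h y hy)
    set I := ⨅ i, (F i x - F i y - ℓ / 2 * ‖x - y‖ ^ 2) with hI
    have h1 : ∀ i, I ≤ F i x - F i y - ℓ / 2 * ‖x - y‖ ^ 2 := fun i =>
      ciInf_le (Set.finite_range _).bddBelow i
    have h2 : ∑ i, lam i * I ≤ ∑ i, lam i * (F i x - F i y - ℓ / 2 * ‖x - y‖ ^ 2) :=
      Finset.sum_le_sum fun i _ => mul_le_mul_of_nonneg_left (h1 i) (hl.1 i)
    simp only [mul_sub, Finset.sum_sub_distrib, ← Finset.sum_mul, hl.2, one_mul] at h2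
    show I ≤ _
    linarith
  exact ⟨⟨C, key⟩, csSup_le (hS.image _) key⟩

theorem merit_dual_aux {n m : ℕ} (hm : 0 < m) (ℓ : ℝ) (hℓ : 0 < ℓ)
    (S : Set (EuclideanSpace ℝ (Fin n))) (hS : S.Nonempty) (hSconv : Convex ℝ S)
    (F : Fin m → EuclideanSpace ℝ (Fin n) → ℝ)
    (hFconv : ∀ i, ConvexOn ℝ Set.univ (F i))
    (x : EuclideanSpace ℝ (Fin n))
    (hb : BddAbove ((fun y => ⨅ i, (F i x - F i y - ℓ / 2 * ‖x - y‖ ^ 2)) '' S)) :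
    ∃ lam ∈ stdSimplex ℝ (Fin m), ∀ y ∈ S,
      (∑ i, lam i * F i x) - ((∑ i, lam i * F i y) + ℓ / 2 * ‖x - y‖ ^ 2) ≤ meritU ℓ S F x := by
  haveI : Nonempty (Fin m) := ⟨⟨0, hm⟩⟩
  obtain ⟨lam, hl, h⟩ := alt_aux S hS
    (fun i y => F i y + (ℓ / 2 * ‖x - y‖ ^ 2 + (meritU ℓ S F x - F i x))) (fun i => by
      refine ((hFconv i).subset (Set.subset_univ _) hSconv).add ?_
      refine ConvexOn.add_const ?_ _
      refine ⟨hSconv, fun y _ w _ a b ha hb hab => ?_⟩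
      have hb' : b = 1 - a := by linarith
      subst hb'
      have e1 : x - (a • y + (1 - a) • w) = (x - w) - a • (y - w) := by module
      have e2 : x - y = (x - w) - (y - w) := by abel
      simp only [smul_eq_mul]
      rw [e1, e2, norm_sub_sq_real, norm_sub_sq_real (x - w) (y - w), inner_smul_right, norm_smul,
        mul_pow, Real.norm_eq_abs, sq_abs]
      have := mul_nonneg (mul_nonneg (mul_nonneg ha hb) hℓ.le) (sq_nonneg ‖y - w‖)
      linarith) hSconv (fun y hy => by
      obtain ⟨i, hi⟩ := exists_eq_ciInf_of_finite
        (f := fun i => F i x - F i y - ℓ / 2 * ‖x - y‖ ^ 2)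
      refine ⟨i, ?_⟩
      have : (⨅ i, (F i x - F i y - ℓ / 2 * ‖x - y‖ ^ 2)) ≤ meritU ℓ S F x :=
        le_csSup hb ⟨y, hy, rfl⟩
      rw [← hi] at this
      show 0 ≤ F i y + (ℓ / 2 * ‖x - y‖ ^ 2 + (meritU ℓ S F x - F i x))
      linarith)
  refine ⟨lam, hl, fun y hy => ?_⟩
  have := h y hy
  simp only [mul_sub, mul_add, Finset.sum_sub_distrib, Finset.sum_add_distrib, ← Finset.sum_mul,
    hl.2, one_mul] at this
  linarith

/-- directional differentiability of `u_ℓ`: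
`u_ℓ′(x; z - x) = inf_{λ ∈ Λ(x)} { Σ_i λ_i F_i′(x; z - x) - ℓ ⟨x - p(λ), z - x⟩ }`,
where `Λ(x)` is the set of minimizers of the dual objective over the standard simplex and
`p(λ)` is the unique minimizer over `S` of `y ↦ Σ_i λ_i F_i(y) + (ℓ/2)‖x - y‖²`. -/
theorem meritU_hasDirDeriv {n m : ℕ} (hm : 0 < m)
    (S : Set (EuclideanSpace ℝ (Fin n))) (hS : S.Nonempty)
    (hSclosed : IsClosed S) (hSconv : Convex ℝ S)
    (F : Fin m → EuclideanSpace ℝ (Fin n) → ℝ)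
    (hFconv : ∀ i, ConvexOn ℝ Set.univ (F i))
    (ℓ : ℝ) (hℓ : 0 < ℓ)
    (x : EuclideanSpace ℝ (Fin n)) (hx : x ∈ S)
    (p : (Fin m → ℝ) → EuclideanSpace ℝ (Fin n))
    (hpmem : ∀ lam ∈ stdSimplex ℝ (Fin m), p lam ∈ S)
    (hpmin : ∀ lam ∈ stdSimplex ℝ (Fin m), ∀ y ∈ S,
      (∑ i, lam i * F i (p lam)) + ℓ / 2 * ‖x - p lam‖ ^ 2 ≤
        (∑ i, lam i * F i y) + ℓ / 2 * ‖x - y‖ ^ 2)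
    (dF : Fin m → EuclideanSpace ℝ (Fin n) → ℝ)
    (hdF : ∀ i, ∀ z ∈ S, HasDirDeriv (F i) x (z - x) (dF i z)) :
    ∀ z ∈ S, HasDirDeriv (meritU ℓ S F) x (z - x)
      (sInf {w : ℝ | ∃ lam, (lam ∈ stdSimplex ℝ (Fin m) ∧
          ∀ lam' ∈ stdSimplex ℝ (Fin m), dualObjU ℓ S F x lam ≤ dualObjU ℓ S F x lam') ∧
        w = (∑ i, lam i * dF i z) - ℓ * ⟪x - p lam, z - x⟫}) := by
  classical
  intro z hz
  set d := z - x with hd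
  set u := meritU ℓ S F with hu
  set E : (Fin m → ℝ) → EuclideanSpace ℝ (Fin n) → ℝ :=
    fun lam y => (∑ i, lam i * F i y) + ℓ / 2 * ‖x - y‖ ^ 2 with hE
  have strong : ∀ lam ∈ stdSimplex ℝ (Fin m), ∀ y ∈ S,
      E lam (p lam) + ℓ / 2 * ‖y - p lam‖ ^ 2 ≤ E lam y := fun lam hl y hy =>
    strong_aux S hSconv F hFconv ℓ x (p lam) (hpmem lam hl) lam hl (hpmin lam hl) y hy
  -- expansion of the square
  have expand : ∀ (t : ℝ) (y : EuclideanSpace ℝ (Fin n)), ‖x + t • d - y‖ ^ 2 =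
      ‖x - y‖ ^ 2 + 2 * t * ⟪x - y, d⟫ + t ^ 2 * ‖d‖ ^ 2 := by
    intro t y
    have e1 : x + t • d - y = (x - y) + t • d := by abel
    rw [e1, norm_add_sq_real, inner_smul_right, norm_smul, mul_pow, Real.norm_eq_abs, sq_abs]
    ring
  have lowerE : ∀ lam ∈ stdSimplex ℝ (Fin m), ∀ y ∈ S, ∀ t : ℝ,
      E lam (p lam) + t * ℓ * ⟪x - p lam, d⟫ ≤
        (∑ i, lam i * F i y) + ℓ / 2 * ‖x + t • d - y‖ ^ 2 := by
    intro lam hl y hy t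
    have h1 := strong lam hl y hy
    have h2 : 0 ≤ ℓ / 2 * ‖(y - p lam) - t • d‖ ^ 2 := by positivity
    rw [norm_sub_sq_real, inner_smul_right, norm_smul, mul_pow, Real.norm_eq_abs, sq_abs] at h2
    have h3 : ⟪x - y, d⟫ = ⟪x - p lam, d⟫ - ⟪y - p lam, d⟫ := by
      rw [← inner_sub_left]; congr 1; abel
    rw [expand, h3]
    simp only [hE] at h1 ⊢
    linarith
  -- upper bound
  have upper : ∀ lam ∈ stdSimplex ℝ (Fin m), ∀ t : ℝ,
      BddAbove ((fun y => ⨅ i, (F i (x + t • d) - F i y - ℓ / 2 * ‖x + t • d - y‖ ^ 2)) '' S) ∧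
      u (x + t • d) ≤ (∑ i, lam i * F i (x + t • d)) -
        (E lam (p lam) + t * ℓ * ⟪x - p lam, d⟫) := by
    intro lam hl t
    refine merit_le_aux ℓ S hS F (x + t • d) lam hl _ fun y hy => ?_
    have := lowerE lam hl y hy t
    linarith
  have hl1 : (Pi.single ⟨0, hm⟩ 1 : Fin m → ℝ) ∈ stdSimplex ℝ (Fin m) :=
    single_mem_stdSimplex ℝ _
  have dual : ∀ t : ℝ, ∃ lam ∈ stdSimplex ℝ (Fin m), ∀ y ∈ S,
      (∑ i, lam i * F i (x + t • d)) - ((∑ i, lam i * F i y) + ℓ / 2 * ‖x + t • d - y‖ ^ 2)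
        ≤ u (x + t • d) := fun t =>
    merit_dual_aux hm ℓ hℓ S hS hSconv F hFconv (x + t • d) (upper _ hl1 t).1
  -- the dual objective
  have hdual : ∀ lam ∈ stdSimplex ℝ (Fin m),
      dualObjU ℓ S F x lam = (∑ i, lam i * F i x) - E lam (p lam) := by
    intro lam hl
    unfold dualObjU
    congr 1
    refine IsLeast.csInf_eq ⟨⟨p lam, hpmem lam hl, rfl⟩, ?_⟩
    rintro _ ⟨y, hy, rfl⟩
    exact hpmin lam hl y hy
  have weak : ∀ lam ∈ stdSimplex ℝ (Fin m), u x ≤ (∑ i, lam i * F i x) - E lam (p lam) := by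
    intro lam hl
    simpa using (upper lam hl 0).2
  obtain ⟨l0, hl0, hl0'⟩ := dual 0
  simp only [zero_smul, add_zero] at hl0'
  have hl0eq : (∑ i, l0 i * F i x) - E l0 (p l0) = u x :=
    le_antisymm (hl0' _ (hpmem l0 hl0)) (weak l0 hl0)
  have optiff : ∀ lam ∈ stdSimplex ℝ (Fin m),
      (∀ lam' ∈ stdSimplex ℝ (Fin m), dualObjU ℓ S F x lam ≤ dualObjU ℓ S F x lam') ↔
      (∑ i, lam i * F i x) - E lam (p lam) ≤ u x := by
    intro lam hl
    constructor
    · intro h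
      have := h l0 hl0
      rwa [hdual _ hl, hdual _ hl0, hl0eq] at this
    · intro h lam' hl'
      rw [hdual _ hl, hdual _ hl']
      exact h.trans (weak lam' hl')
  set W : Set ℝ := {w : ℝ | ∃ lam, (lam ∈ stdSimplex ℝ (Fin m) ∧
          ∀ lam' ∈ stdSimplex ℝ (Fin m), dualObjU ℓ S F x lam ≤ dualObjU ℓ S F x lam') ∧
        w = (∑ i, lam i * dF i z) - ℓ * ⟪x - p lam, d⟫} with hW
  have hWne : W.Nonempty := ⟨_, l0, ⟨hl0, (optiff l0 hl0).2 hl0eq.le⟩, rfl⟩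
  have absb : ∀ lam ∈ stdSimplex ℝ (Fin m), ∀ a : Fin m → ℝ, ∑ i, lam i * a i ≤ ∑ i, |a i| := by
    intro lam hl a
    refine Finset.sum_le_sum fun i _ => ?_
    have h1 : lam i ≤ 1 := by
      rw [← hl.2]
      exact Finset.single_le_sum (fun j _ => hl.1 j) (Finset.mem_univ i)
    calc lam i * a i ≤ lam i * |a i| := mul_le_mul_of_nonneg_left (le_abs_self _) (hl.1 i)
      _ ≤ 1 * |a i| := mul_le_mul_of_nonneg_right h1 (abs_nonneg _)
      _ = _ := one_mul _
  have hWbdd : BddBelow W := by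
    refine ⟨u (x + (1:ℝ) • d) - u x - ∑ i, |F i (x + (1:ℝ) • d) - F i x - dF i z|, ?_⟩
    rintro _ ⟨lam, ⟨hl, ho⟩, rfl⟩
    have h1 := (optiff lam hl).1 ho
    have h2 := (upper lam hl 1).2
    have h3 := absb lam hl (fun i => F i (x + (1:ℝ) • d) - F i x - dF i z)
    simp only [mul_sub, Finset.sum_sub_distrib] at h3
    linarith
  -- directional derivatives
  have hdF' : ∀ i, Filter.Tendsto (fun t : ℝ => (F i (x + t • d) - F i x) / t)
    (nhdsWithin 0 (Set.Ioi 0)) (nhds (dF i z)) := fun i => hdF i z hz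
  have hid : Filter.Tendsto (fun t : ℝ => t) (nhdsWithin 0 (Set.Ioi 0)) (nhds 0) :=
    nhdsWithin_le_nhds
  have hFc : ∀ i, Filter.Tendsto (fun t : ℝ => F i (x + t • d))
    (nhdsWithin 0 (Set.Ioi 0)) (nhds (F i x)) := by
    intro i
    have h1 := ((hdF' i).mul hid).add_const (F i x)
    rw [mul_zero, zero_add] at h1
    refine h1.congr' ?_
    filter_upwards [self_mem_nhdsWithin] with t ht
    have : t ≠ 0 := ne_of_gt ht
    field_simp
    ring
  unfold HasDirDeriv
  refine tendsto_order.2 ⟨fun a ha => ?_, fun a ha => ?_⟩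
  · -- lower bound
    by_contra hcon
    rw [Filter.not_eventually] at hcon
    have hcon' := hcon.and_eventually self_mem_nhdsWithin
    obtain ⟨t, htend, ht⟩ := Filter.exists_seq_forall_of_frequently hcon'
    choose lt hlt hlt' using fun k => dual (t k)
    obtain ⟨lb, hlb, φ, hφ, hconv⟩ := (isCompact_stdSimplex ℝ (Fin m)).tendsto_subseq hlt
    have hts : Filter.Tendsto (fun k => t (φ k)) Filter.atTop (nhdsWithin 0 (Set.Ioi 0)) :=
      htend.comp hφ.tendsto_atTop
    have ht0 : Filter.Tendsto (fun k => t (φ k)) Filter.atTop (nhds 0) := hid.comp hts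
    have hli : ∀ i, Filter.Tendsto (fun k => lt (φ k) i) Filter.atTop (nhds (lb i)) :=
      fun i => (tendsto_pi_nhds.1 hconv) i
    have hFk : ∀ i, Filter.Tendsto (fun k => F i (x + t (φ k) • d)) Filter.atTop (nhds (F i x)) :=
      fun i => (hFc i).comp hts
    -- upper bound sequence
    have hU : Filter.Tendsto (fun k => (∑ i, l0 i * F i (x + t (φ k) • d)) -
        (E l0 (p l0) + t (φ k) * ℓ * ⟪x - p l0, d⟫)) Filter.atTop (nhds (u x)) := by
      have : Filter.Tendsto (fun k => (∑ i, l0 i * F i (x + t (φ k) • d)) -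
        (E l0 (p l0) + t (φ k) * ℓ * ⟪x - p l0, d⟫)) Filter.atTop
        (nhds ((∑ i, l0 i * F i x) - (E l0 (p l0) + 0 * ℓ * ⟪x - p l0, d⟫))) :=
        (tendsto_finsetSum _ fun i _ => (hFk i).const_mul _).sub
          (((ht0.mul_const _).mul_const _).const_add _)
      rw [zero_mul, zero_mul, add_zero, hl0eq] at this
      exact this
    have hsumF : Filter.Tendsto (fun k => ∑ i, lt (φ k) i * F i (x + t (φ k) • d)) Filter.atTop
        (nhds (∑ i, lb i * F i x)) := tendsto_finsetSum _ fun i _ => (hli i).mul (hFk i)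
    have hsumy : ∀ y, Filter.Tendsto (fun k => ∑ i, lt (φ k) i * F i y) Filter.atTop
        (nhds (∑ i, lb i * F i y)) := fun y =>
      tendsto_finsetSum _ fun i _ => (hli i).mul_const _
    have hlbopt : (∑ i, lb i * F i x) - E lb (p lb) ≤ u x := by
      have h1 : Filter.Tendsto (fun k => (∑ i, lt (φ k) i * F i (x + t (φ k) • d)) -
          ((∑ i, lt (φ k) i * F i (p lb)) + ℓ / 2 * ‖x + t (φ k) • d - p lb‖ ^ 2)) Filter.atTop
          (nhds ((∑ i, lb i * F i x) - ((∑ i, lb i * F i (p lb)) +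
            ℓ / 2 * ‖x + (0:ℝ) • d - p lb‖ ^ 2))) :=
        hsumF.sub ((hsumy _).add
          (((((ht0.smul_const d).const_add x).sub_const _).norm.pow 2).const_mul _))
      rw [zero_smul, add_zero] at h1
      exact le_of_tendsto_of_tendsto' h1 hU fun k =>
        (hlt' (φ k) _ (hpmem lb hlb)).trans (upper l0 hl0 (t (φ k))).2
    have hlbeq := le_antisymm hlbopt (weak lb hlb)
    -- convergence of the proximal points
    have hsq : Filter.Tendsto (fun k => ‖p lb - p (lt (φ k)) - t (φ k) • d‖ ^ 2) Filter.atTop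
        (nhds 0) := by
      have h1 : Filter.Tendsto (fun k => (2 / ℓ) * (E (lt (φ k)) (p lb) +
          ((∑ i, l0 i * F i (x + t (φ k) • d)) -
        (E l0 (p l0) + t (φ k) * ℓ * ⟪x - p l0, d⟫)) -
          (∑ i, lt (φ k) i * F i (x + t (φ k) • d)) + t (φ k) * (ℓ * ⟪x - p lb, d⟫) +
          t (φ k) ^ 2 * (ℓ * ‖d‖ ^ 2))) Filter.atTop (nhds ((2 / ℓ) * (E lb (p lb) + u x -
            (∑ i, lb i * F i x) + 0 * (ℓ * ⟪x - p lb, d⟫) + 0 ^ 2 * (ℓ * ‖d‖ ^ 2)))) :=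
        (((((((hsumy (p lb)).add_const _).add hU).sub hsumF).add (ht0.mul_const _)).add
          ((ht0.pow 2).mul_const _))).const_mul _
      have h2 : (2 / ℓ) * (E lb (p lb) + u x -
            (∑ i, lb i * F i x) + 0 * (ℓ * ⟪x - p lb, d⟫) + 0 ^ 2 * (ℓ * ‖d‖ ^ 2)) = 0 := by
        rw [← hlbeq]; ring
      rw [h2] at h1
      refine squeeze_zero (fun k => by positivity) (fun k => ?_) h1
      have a1 := strong (lt (φ k)) (hlt _) (p lb) (hpmem lb hlb)
      have a2 := hlt' (φ k) _ (hpmem _ (hlt (φ k)))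
      have a3 := (upper l0 hl0 (t (φ k))).2
      rw [expand] at a2
      rw [norm_sub_sq_real, inner_smul_right, norm_smul, mul_pow, Real.norm_eq_abs, sq_abs]
      have h3 : ⟪x - p (lt (φ k)), d⟫ = ⟪x - p lb, d⟫ + ⟪p lb - p (lt (φ k)), d⟫ := by
        rw [← inner_add_left]; congr 1; abel
      rw [h3] at a2
      rw [div_mul_eq_mul_div, le_div_iff₀ hℓ]
      simp only [hE] at a1 a2 a3 ⊢
      linarith
    have hpk : Filter.Tendsto (fun k => p (lt (φ k))) Filter.atTop (nhds (p lb)) := by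
      have h1 : Filter.Tendsto (fun k => ‖p lb - p (lt (φ k)) - t (φ k) • d‖) Filter.atTop
          (nhds 0) := by
        have := hsq.sqrt
        simpa using this
      have h2 := tendsto_zero_iff_norm_tendsto_zero.2 h1
      have h3 := (h2.add (ht0.smul_const d)).const_sub (p lb)
      simpa using h3
    -- pass to the limit
    have hlim : Filter.Tendsto (fun k => (∑ i, lt (φ k) i *
        ((F i (x + t (φ k) • d) - F i x) / t (φ k))) - ℓ * ⟪x - p (lt (φ k)), d⟫
        - t (φ k) * (ℓ / 2 * ‖d‖ ^ 2)) Filter.atTop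
        (nhds ((∑ i, lb i * dF i z) - ℓ * ⟪x - p lb, d⟫ - 0 * (ℓ / 2 * ‖d‖ ^ 2))) :=
      ((tendsto_finsetSum _ fun i _ => (hli i).mul ((hdF' i).comp hts)).sub
        (((hpk.const_sub x).inner tendsto_const_nhds).const_mul _)).sub (ht0.mul_const _)
    rw [zero_mul, sub_zero] at hlim
    have hle : (∑ i, lb i * dF i z) - ℓ * ⟪x - p lb, d⟫ ≤ a := by
      refine le_of_tendsto' hlim fun k => ?_
      obtain ⟨b1, b2⟩ := ht (φ k)
      have b2' : 0 < t (φ k) := b2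
      refine le_trans ?_ (not_lt.1 b1)
      rw [le_div_iff₀ b2']
      have c1 := hlt' (φ k) _ (hpmem _ (hlt (φ k)))
      have c2 := weak _ (hlt (φ k))
      rw [expand] at c1
      have c3 : (∑ i, lt (φ k) i * ((F i (x + t (φ k) • d) - F i x) / t (φ k))) * t (φ k) =
          (∑ i, lt (φ k) i * F i (x + t (φ k) • d)) - ∑ i, lt (φ k) i * F i x := by
        rw [Finset.sum_mul, ← Finset.sum_sub_distrib]
        refine Finset.sum_congr rfl fun i _ => ?_
        field_simp
      rw [sub_mul, sub_mul, c3]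
      simp only [hE] at c2
      linarith
    have := csInf_le hWbdd ⟨lb, ⟨hlb, (optiff lb hlb).2 hlbopt⟩, rfl⟩
    linarith
  · -- upper bound
    obtain ⟨w, ⟨lam, ⟨hl, ho⟩, rfl⟩, hwa⟩ := exists_lt_of_csInf_lt hWne ha
    have h1 := (optiff lam hl).1 ho
    have hlim : Filter.Tendsto (fun t : ℝ => (∑ i, lam i *
        ((F i (x + t • d) - F i x) / t)) - ℓ * ⟪x - p lam, d⟫) (nhdsWithin 0 (Set.Ioi 0))
        (nhds ((∑ i, lam i * dF i z) - ℓ * ⟪x - p lam, d⟫)) :=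
      (tendsto_finsetSum _ fun i _ => (hdF' i).const_mul _).sub_const _
    filter_upwards [hlim.eventually (gt_mem_nhds hwa), self_mem_nhdsWithin] with t hta ht
    have ht' : 0 < t := ht
    refine lt_of_le_of_lt ?_ hta
    rw [div_le_iff₀ ht']
    have c3 : (∑ i, lam i * ((F i (x + t • d) - F i x) / t)) * t =
        (∑ i, lam i * F i (x + t • d)) - ∑ i, lam i * F i x := by
      rw [Finset.sum_mul, ← Finset.sum_sub_distrib]
      refine Finset.sum_congr rfl fun i _ => ?_
      field_simp
    have h2 := weak lam hl
    have h3 := (upper lam hl t).2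
    rw [sub_mul, c3]
    linarith
end

section
/- Suppose each F_i is strictly convex and let ℓ > 0. If x ∈ S satisfies u_ℓ′(x; z − x) ≥ 0 for all z ∈ S (these directional derivatives exist), then x is Pareto optimal for min_{x∈S} F(x). -/
lemma pm_norm_comb {E : Type*} [NormedAddCommGroup E] [InnerProductSpace ℝ E] (a b : E) (p q : ℝ) :
    ‖p • a + q • b‖ ^ 2 = p ^ 2 * ‖a‖ ^ 2 + 2 * (p * q) * inner ℝ a b + q ^ 2 * ‖b‖ ^ 2 := by
  rw [norm_add_sq_real, norm_smul, norm_smul, mul_pow, mul_pow, real_inner_smul_left,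
    real_inner_smul_right]
  simp only [Real.norm_eq_abs, sq_abs]
  ring

lemma pm_exists_max {n m : ℕ} (hm : 0 < m)
    (S : Set (EuclideanSpace ℝ (Fin n)))
    (hSclosed : IsClosed S)
    (F : Fin m → EuclideanSpace ℝ (Fin n) → ℝ)
    (hF : ∀ i, ConvexOn ℝ Set.univ (F i))
    (ℓ : ℝ) (hℓ : 0 < ℓ)
    (x : EuclideanSpace ℝ (Fin n)) (hx : x ∈ S) :
    ∃ y ∈ S, ∀ z ∈ S, (⨅ i, (F i x - F i z - ℓ / 2 * ‖x - z‖ ^ 2)) ≤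
      ⨅ i, (F i x - F i y - ℓ / 2 * ‖x - y‖ ^ 2) := by
  have : Nonempty (Fin m) := ⟨⟨0, hm⟩⟩
  have hcont : ∀ i, Continuous (F i) := fun i =>
    continuousOn_univ.1 ((hF i).continuousOn isOpen_univ)
  set φ : EuclideanSpace ℝ (Fin n) → ℝ :=
    fun y => ⨅ i, (F i x - F i y - ℓ / 2 * ‖x - y‖ ^ 2) with hφ
  have hφc : Continuous φ := by
    have : φ = fun y => Finset.univ.inf' Finset.univ_nonempty
        (fun i => (F i x - F i y - ℓ / 2 * ‖x - y‖ ^ 2)) := by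
      funext y
      rw [Finset.inf'_univ_eq_ciInf]
    rw [this]
    apply Continuous.finset_inf'_apply
    intro i _
    have := hcont i
    fun_prop
  have hφx : φ x = 0 := by simp [hφ]
  let i0 : Fin m := ⟨0, hm⟩
  obtain ⟨w, -, hw⟩ := (isCompact_closedBall x 1).exists_isMinOn
    (Metric.nonempty_closedBall.2 zero_le_one) (hcont i0).continuousOn
  set C := F i0 x - F i0 w with hC
  have hC0 : 0 ≤ C := by
    have := hw (Metric.mem_closedBall_self zero_le_one)
    simp only [Set.mem_ofPred_eq] at this
    linarith
  set R := 1 + 2 * C / ℓ with hR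
  have hR1 : 1 ≤ R := by
    have : 0 ≤ 2 * C / ℓ := by positivity
    linarith
  obtain ⟨y, hy, hymax⟩ := ((isCompact_closedBall x R).inter_left hSclosed).exists_isMaxOn
    ⟨x, hx, Metric.mem_closedBall_self (by linarith)⟩ hφc.continuousOn
  refine ⟨y, hy.1, fun z hz => ?_⟩
  change φ z ≤ φ y
  by_cases hzR : z ∈ Metric.closedBall x R
  · exact hymax ⟨hz, hzR⟩
  · have hxy : φ x ≤ φ y := hymax ⟨hx, Metric.mem_closedBall_self (by linarith)⟩
    rw [Metric.mem_closedBall, dist_eq_norm, not_le] at hzR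
    set r := ‖z - x‖ with hr
    have hr1 : 1 < r := by linarith
    have hr0 : 0 < r := by linarith
    have h1 : φ z ≤ F i0 x - F i0 z - ℓ / 2 * ‖x - z‖ ^ 2 := ciInf_le (Set.finite_range _).bddBelow i0
    rw [norm_sub_rev, ← hr] at h1
    have hri : r⁻¹ ≤ 1 := inv_le_one_of_one_le₀ hr1.le
    have hcv := (hF i0).2 (Set.mem_univ x) (Set.mem_univ z) (sub_nonneg.2 hri)
      (inv_nonneg.2 hr0.le) (by ring)
    have hmem : (1 - r⁻¹) • x + r⁻¹ • z ∈ Metric.closedBall x 1 := by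
      rw [Metric.mem_closedBall, dist_eq_norm]
      have : (1 - r⁻¹) • x + r⁻¹ • z - x = r⁻¹ • (z - x) := by module
      rw [this, norm_smul, Real.norm_eq_abs, abs_of_pos (inv_pos.2 hr0), ← hr,
        inv_mul_cancel₀ hr0.ne']
    have h2 : F i0 w ≤ _ := hw hmem
    simp only [smul_eq_mul] at hcv
    have h3 : r⁻¹ * (F i0 x - F i0 z) ≤ C := by
      rw [hC]; nlinarith
    have h4 : F i0 x - F i0 z ≤ r * C := by
      rw [inv_mul_le_iff₀ hr0] at h3; exact h3
    have h5 : C ≤ ℓ / 2 * r := by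
      have : 2 * C / ℓ ≤ r := by linarith
      rw [div_le_iff₀ hℓ] at this
      linarith
    nlinarith

theorem pareto_optimal_of_meritU_stationary {n m : ℕ} (hm : 0 < m)
    (S : Set (EuclideanSpace ℝ (Fin n))) (hS : S.Nonempty)
    (hSclosed : IsClosed S) (hSconv : Convex ℝ S)
    (F : Fin m → EuclideanSpace ℝ (Fin n) → ℝ)
    (hFsconv : ∀ i, StrictConvexOn ℝ Set.univ (F i))
    (ℓ : ℝ) (hℓ : 0 < ℓ)
    (x : EuclideanSpace ℝ (Fin n)) (hx : x ∈ S)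
    (hstat : ∀ z ∈ S, ∃ v, HasDirDeriv (meritU ℓ S F) x (z - x) v ∧ 0 ≤ v) :
    ¬ ∃ z ∈ S, (∀ i, F i z ≤ F i x) ∧ ∃ j, F j z < F j x := by
  rintro ⟨z, hzS, hz, j, hj⟩
  have : Nonempty (Fin m) := ⟨⟨0, hm⟩⟩
  obtain ⟨y, hyS, hy⟩ := pm_exists_max hm S hSclosed F (fun i => (hFsconv i).convexOn) ℓ hℓ x hx
  set φ : EuclideanSpace ℝ (Fin n) → ℝ :=
    fun y => ⨅ i, (F i x - F i y - ℓ / 2 * ‖x - y‖ ^ 2) with hφ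
  have hle : ∀ p i, φ p ≤ F i x - F i p - ℓ / 2 * ‖x - p‖ ^ 2 := fun p i =>
    ciInf_le (Set.finite_range _).bddBelow i
  have hatt : ∀ p, ∃ i, F i x - F i p - ℓ / 2 * ‖x - p‖ ^ 2 = φ p := fun p =>
    exists_eq_ciInf_of_finite
  have hφx : φ x = 0 := by simp [hφ]
  have hmax : ∀ p ∈ S, φ p ≤ φ y := hy
  have hux : meritU ℓ S F x = φ y := by
    apply IsGreatest.csSup_eq
    refine ⟨⟨y, hyS, rfl⟩, ?_⟩
    rintro _ ⟨p, hp, rfl⟩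
    exact hmax p hp
  -- strong concavity
  have hstrong : ∀ p ∈ S, φ p + ℓ / 2 * ‖p - y‖ ^ 2 ≤ φ y := by
    intro p hp
    have key : ∀ s : ℝ, 0 < s → s < 1 → φ p + ℓ / 2 * (1 - s) * ‖p - y‖ ^ 2 ≤ φ y := by
      intro s hs0 hs1
      have hmem : (1 - s) • y + s • p ∈ S := hSconv hyS hp (by linarith) hs0.le (by ring)
      obtain ⟨i, hi⟩ := hatt ((1 - s) • y + s • p)
      have h1 := hmax _ hmem
      have h2 := (hFsconv i).convexOn.2 (Set.mem_univ y) (Set.mem_univ p)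
        (by linarith : 0 ≤ 1 - s) hs0.le (by ring)
      have e1 : x - ((1 - s) • y + s • p) = (1 - s) • (x - y) + s • (x - p) := by module
      have e2 : p - y = (1:ℝ) • (x - y) + (-1:ℝ) • (x - p) := by module
      have n1 := pm_norm_comb (x - y) (x - p) (1 - s) s
      have n2 := pm_norm_comb (x - y) (x - p) 1 (-1)
      rw [← e1] at n1
      rw [← e2] at n2
      have a1 := hle y i
      have a2 := hle p i
      simp only [smul_eq_mul] at h2
      have n3 : ‖x - ((1 - s) • y + s • p)‖ ^ 2 = (1 - s) * ‖x - y‖ ^ 2 + s * ‖x - p‖ ^ 2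
          - s * (1 - s) * ‖p - y‖ ^ 2 := by rw [n1, n2]; ring
      rw [n3] at hi
      have b1 := mul_le_mul_of_nonneg_left a1 (by linarith : 0 ≤ 1 - s)
      have b2 := mul_le_mul_of_nonneg_left a2 hs0.le
      have : s * (φ p + ℓ / 2 * (1 - s) * ‖p - y‖ ^ 2) ≤ s * φ y := by linarith
      exact le_of_mul_le_mul_left this hs0
    have ht : Filter.Tendsto (fun s : ℝ => φ p + ℓ / 2 * (1 - s) * ‖p - y‖ ^ 2)
        (nhdsWithin 0 (Set.Ioi 0)) (nhds (φ p + ℓ / 2 * (1 - 0) * ‖p - y‖ ^ 2)) := by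
      apply Filter.Tendsto.mono_left _ nhdsWithin_le_nhds
      apply Continuous.tendsto (f := fun s : ℝ => φ p + ℓ / 2 * (1 - s) * ‖p - y‖ ^ 2)
      fun_prop
    have := le_of_tendsto ht (b := φ y) (by
      filter_upwards [Ioo_mem_nhdsGT (zero_lt_one' ℝ)] with s hs
      exact key s hs.1 hs.2)
    simpa using this
  have hzx : z ≠ x := by rintro rfl; exact lt_irrefl _ hj
  have hmid : ∀ i (p q : EuclideanSpace ℝ (Fin n)), p ≠ q →
      F i ((1/2:ℝ) • p + (1/2:ℝ) • q) < 1/2 * F i p + 1/2 * F i q := by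
    intro i p q hpq
    exact (hFsconv i).2 (Set.mem_univ p) (Set.mem_univ q) hpq (by norm_num) (by norm_num)
      (by norm_num)
  have hyx : x ≠ y := by
    rintro hxy
    have hwS : (1/2:ℝ) • z + (1/2:ℝ) • x ∈ S :=
      hSconv hzS hx (by norm_num) (by norm_num) (by norm_num)
    have h1 := hstrong _ hwS
    obtain ⟨i, hi⟩ := hatt ((1/2:ℝ) • z + (1/2:ℝ) • x)
    have h2 := hmid i z x hzx
    have h3 := hz i
    rw [← hxy, hφx, norm_sub_rev] at h1
    linarith
  obtain ⟨i1, hi1⟩ := exists_eq_ciInf_of_finite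
    (f := fun i => F i x + F i y - 2 * F i ((1/2:ℝ) • x + (1/2:ℝ) • y))
  set δ := ⨅ i, (F i x + F i y - 2 * F i ((1/2:ℝ) • x + (1/2:ℝ) • y)) with hδ
  have hδ0 : 0 < δ := by
    rw [← hi1]
    have := hmid i1 x y hyx
    linarith
  have hδle : ∀ i, δ ≤ F i x + F i y - 2 * F i ((1/2:ℝ) • x + (1/2:ℝ) • y) := fun i =>
    ciInf_le (Set.finite_range _).bddBelow i
  have hu := hstrong x hx
  rw [hφx, zero_add] at hu
  have main : ∀ t : ℝ, 0 < t → t < 1/2 →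
      (meritU ℓ S F (x + t • (y - x)) - meritU ℓ S F x) / t ≤ -δ := by
    intro t ht0 ht1
    rw [div_le_iff₀ ht0, hux, sub_le_iff_le_add]
    apply csSup_le (hS.image _)
    rintro _ ⟨p, hp, rfl⟩
    obtain ⟨i, hi⟩ := hatt p
    refine (ciInf_le (Set.finite_range _).bddBelow i).trans ?_
    have h1 := (hFsconv i).convexOn.2 (Set.mem_univ x)
      (Set.mem_univ ((1/2:ℝ) • x + (1/2:ℝ) • y))
      (by linarith : 0 ≤ 1 - 2 * t) (by linarith : 0 ≤ 2 * t) (by ring)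
    have e0 : (1 - 2 * t) • x + (2 * t) • ((1/2:ℝ) • x + (1/2:ℝ) • y) = x + t • (y - x) := by
      module
    rw [e0] at h1
    simp only [smul_eq_mul] at h1
    have h2 := mul_le_mul_of_nonneg_left (hδle i) ht0.le
    have h3 := mul_le_mul_of_nonneg_left (hle y i) ht0.le
    have h4 := hstrong p hp
    have h5 := mul_le_mul_of_nonneg_left hu ht0.le
    have e1 : x + t • (y - x) - p = (1 - t) • (x - y) + (-1:ℝ) • (p - y) := by module
    have e2 : x - p = (1:ℝ) • (x - y) + (-1:ℝ) • (p - y) := by module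
    have n1 := pm_norm_comb (x - y) (p - y) (1 - t) (-1)
    have n2 := pm_norm_comb (x - y) (p - y) 1 (-1)
    have n3 := pm_norm_comb (x - y) (p - y) t 1
    rw [← e1] at n1
    rw [← e2] at n2
    have n4 : 0 ≤ ℓ / 2 * ‖t • (x - y) + (1:ℝ) • (p - y)‖ ^ 2 := by positivity
    rw [n3] at n4
    rw [n2] at hi
    rw [n1]
    linarith
  obtain ⟨v, hv, hv0⟩ := hstat y hyS
  have : v ≤ -δ := le_of_tendsto hv (by
    filter_upwards [Ioo_mem_nhdsGT (by norm_num : (0:ℝ) < 1/2)] with t ht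
    exact main t ht.1 ht.2)
  linarith
end

section
/- Let ℓ > 0. For every x ∈ S one has w_ℓ(x) ≥ 0. Moreover, x ∈ S is Pareto stationary for min_{x∈S} F(x) if and only if w_ℓ(x) = 0. -/
open scoped RealInnerProductSpace

/-- The regularized and partially linearized merit function
`w_ℓ(x) = max_{y ∈ S} min_i (⟨∇f_i(x), x - y⟩ + g_i(x) - g_i(y) - (ℓ/2)‖x - y‖²)`,
where `Gf i x = ∇f_i(x)`. -/
noncomputable def meritW {n m : ℕ} (ℓ : ℝ) (S : Set (EuclideanSpace ℝ (Fin n)))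
    (Gf : Fin m → EuclideanSpace ℝ (Fin n) → EuclideanSpace ℝ (Fin n))
    (g : Fin m → EuclideanSpace ℝ (Fin n) → ℝ)
    (x : EuclideanSpace ℝ (Fin n)) : ℝ :=
  sSup ((fun y => ⨅ i, (⟪Gf i x, x - y⟫ + g i x - g i y - ℓ / 2 * ‖x - y‖ ^ 2)) '' S)


lemma aux_lower {n : ℕ} (g : EuclideanSpace ℝ (Fin n) → ℝ) (hg : ConvexOn ℝ Set.univ g)
    (x : EuclideanSpace ℝ (Fin n)) : ∃ C : ℝ, ∀ y, g x - g y ≤ 1 + C * ‖x - y‖ := by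
  have hc : Continuous g := by
    rw [← continuousOn_univ]
    exact hg.continuousOn isOpen_univ
  obtain ⟨r, hr, h⟩ := Metric.continuousAt_iff.1 (hc.continuousAt (x := x)) 1 one_pos
  refine ⟨2 / r, fun y => ?_⟩
  by_cases hy : ‖x - y‖ < r
  · have h1 := h (x := y) (by rwa [dist_comm, dist_eq_norm])
    rw [Real.dist_eq, abs_lt] at h1
    have : 0 ≤ 2 / r * ‖x - y‖ := by positivity
    linarith
  · push Not at hy
    have hN : 0 < ‖x - y‖ := hr.trans_le hy
    set t := r / (2 * ‖x - y‖) with ht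
    have ht0 : 0 < t := by positivity
    have ht1 : t ≤ 1 := by
      rw [ht, div_le_one (by positivity)]; linarith
    have h1 := h (x := (1 - t) • x + t • y) (by
      have : (1 - t) • x + t • y - x = (-t) • (x - y) := by module
      rw [dist_eq_norm, this, norm_smul, norm_neg, Real.norm_of_nonneg ht0.le, ht]
      have : r / (2 * ‖x - y‖) * ‖x - y‖ = r / 2 := by field_simp
      linarith)
    rw [Real.dist_eq, abs_lt] at h1
    have h2 := hg.2 (Set.mem_univ x) (Set.mem_univ y) (sub_nonneg.2 ht1) ht0.le (by ring)
    simp only [smul_eq_mul] at h2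
    have h3 : t * (g x - g y) ≤ 1 := by linarith [h1.1]
    have h4 : t * (2 / r * ‖x - y‖) = 1 := by rw [ht]; field_simp
    have h5 : g x - g y ≤ 2 / r * ‖x - y‖ := by
      rw [← h4] at h3
      exact le_of_mul_le_mul_left h3 ht0
    linarith

lemma aux_slope {n : ℕ} (g : EuclideanSpace ℝ (Fin n) → ℝ) (hg : ConvexOn ℝ Set.univ g)
    (x y : EuclideanSpace ℝ (Fin n)) (v : ℝ) (h : HasDirDeriv g x (y - x) v) :
    v ≤ g y - g x := by
  refine le_of_tendsto h ?_
  filter_upwards [Ioo_mem_nhdsGT (zero_lt_one' ℝ)] with t ht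
  have h2 := hg.2 (Set.mem_univ x) (Set.mem_univ y) (sub_nonneg.2 ht.2.le) ht.1.le (by ring)
  have : (1 - t) • x + t • y = x + t • (y - x) := by module
  rw [this] at h2
  simp only [smul_eq_mul] at h2
  rw [div_le_iff₀ ht.1]
  linarith

lemma aux_bdd {n m : ℕ} (hm : 0 < m) (S : Set (EuclideanSpace ℝ (Fin n)))
    (g : Fin m → EuclideanSpace ℝ (Fin n) → ℝ)
    (Gf : Fin m → EuclideanSpace ℝ (Fin n) → EuclideanSpace ℝ (Fin n))
    (hgconv : ∀ i, ConvexOn ℝ Set.univ (g i)) (ℓ : ℝ) (hℓ : 0 < ℓ)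
    (x : EuclideanSpace ℝ (Fin n)) :
    BddAbove ((fun y => ⨅ i, (⟪Gf i x, x - y⟫ + g i x - g i y - ℓ / 2 * ‖x - y‖ ^ 2)) '' S) := by
  obtain ⟨C, hC⟩ := aux_lower (g ⟨0, hm⟩) (hgconv _) x
  refine ⟨1 + (‖Gf ⟨0, hm⟩ x‖ + C) ^ 2 / (2 * ℓ), ?_⟩
  rintro _ ⟨y, -, rfl⟩
  refine (ciInf_le (Set.finite_range _).bddBelow ⟨0, hm⟩).trans ?_
  have h1 := real_inner_le_norm (Gf ⟨0, hm⟩ x) (x - y)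
  have h2 := hC y
  set a := ‖Gf ⟨0, hm⟩ x‖
  set N := ‖x - y‖
  have h3 : (a + C) * N - ℓ / 2 * N ^ 2 ≤ (a + C) ^ 2 / (2 * ℓ) := by
    rw [le_div_iff₀ (by positivity)]
    nlinarith [sq_nonneg (a + C - ℓ * N)]
  linarith

/-- `w_ℓ ≥ 0` on `S`, and `x ∈ S` is Pareto stationary
(`max_i F_i′(x; z - x) ≥ 0` for all `z ∈ S`, where
`F_i′(x; d) = ⟨∇f_i(x), d⟩ + g_i′(x; d)`) iff `w_ℓ x = 0`. -/
theorem meritW_nonneg_and_zero_iff_pareto_stationary {n m : ℕ} (hm : 0 < m)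
    (S : Set (EuclideanSpace ℝ (Fin n))) (hS : S.Nonempty)
    (hSclosed : IsClosed S) (hSconv : Convex ℝ S)
    (f g : Fin m → EuclideanSpace ℝ (Fin n) → ℝ)
    (Gf : Fin m → EuclideanSpace ℝ (Fin n) → EuclideanSpace ℝ (Fin n))
    (hGf : ∀ i y, HasGradientAt (f i) (Gf i y) y)
    (hGfc : ∀ i, Continuous (Gf i))
    (hgconv : ∀ i, ConvexOn ℝ Set.univ (g i))
    (dg : Fin m → EuclideanSpace ℝ (Fin n) → EuclideanSpace ℝ (Fin n) → ℝ)
    (hdg : ∀ i y d, HasDirDeriv (g i) y d (dg i y d))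
    (ℓ : ℝ) (hℓ : 0 < ℓ) :
    (∀ x ∈ S, 0 ≤ meritW ℓ S Gf g x) ∧
    (∀ x ∈ S,
      ((∀ z ∈ S, ∃ i, 0 ≤ ⟪Gf i x, z - x⟫ + dg i x (z - x)) ↔
        meritW ℓ S Gf g x = 0)) := by
  have : Nonempty (Fin m) := ⟨⟨0, hm⟩⟩
  have hnn : ∀ x ∈ S, 0 ≤ meritW ℓ S Gf g x := by
    intro x hx
    refine le_csSup (aux_bdd hm S g Gf hgconv ℓ hℓ x) ⟨x, hx, ?_⟩
    simp
  refine ⟨hnn, fun x hx => ⟨fun h => le_antisymm ?_ (hnn x hx), fun h z hz => ?_⟩⟩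
  · refine csSup_le (hS.image _) ?_
    rintro _ ⟨y, hy, rfl⟩
    obtain ⟨i, hi⟩ := h y hy
    refine (ciInf_le (Set.finite_range _).bddBelow i).trans ?_
    have h1 := aux_slope (g i) (hgconv i) x y _ (hdg i x (y - x))
    have h2 : ⟪Gf i x, x - y⟫ = - ⟪Gf i x, y - x⟫ := by rw [← inner_neg_right, neg_sub]
    have h3 : 0 ≤ ℓ / 2 * ‖x - y‖ ^ 2 := by positivity
    linarith
  · by_contra hcon
    push Not at hcon
    have key : ∀ i, ∀ᶠ t in nhdsWithin (0 : ℝ) (Set.Ioi 0),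
        ⟪Gf i x, z - x⟫ + (g i (x + t • (z - x)) - g i x) / t
          + ℓ / 2 * t * ‖z - x‖ ^ 2 < 0 := by
      intro i
      have h1 := hdg i x (z - x)
      unfold HasDirDeriv at h1
      have h2 : Filter.Tendsto (fun t : ℝ => ℓ / 2 * t * ‖z - x‖ ^ 2)
          (nhdsWithin 0 (Set.Ioi 0)) (nhds 0) := by
        have : Continuous (fun t : ℝ => ℓ / 2 * t * ‖z - x‖ ^ 2) := by fun_prop
        simpa using (this.tendsto 0).mono_left nhdsWithin_le_nhds
      have h3 := (h1.const_add ⟪Gf i x, z - x⟫).add h2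
      rw [add_zero] at h3
      exact h3.eventually_lt_const (hcon i)
    obtain ⟨t, ht, ht01⟩ :=
      ((Filter.eventually_all.2 key).and (Ioo_mem_nhdsGT (zero_lt_one' ℝ))).exists
    have hyS : x + t • (z - x) ∈ S := hSconv.add_smul_sub_mem hx hz ⟨ht01.1.le, ht01.2.le⟩
    have hle := le_csSup (aux_bdd hm S g Gf hgconv ℓ hℓ x) ⟨_, hyS, rfl⟩
    change _ ≤ meritW ℓ S Gf g x at hle
    rw [h] at hle
    obtain ⟨i, hi⟩ := exists_eq_ciInf_of_finite (f := fun i =>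
      ⟪Gf i x, x - (x + t • (z - x))⟫ + g i x - g i (x + t • (z - x))
        - ℓ / 2 * ‖x - (x + t • (z - x))‖ ^ 2)
    simp only at hle
    rw [← hi] at hle
    have h4 : x - (x + t • (z - x)) = (-t) • (z - x) := by module
    simp only [h4, inner_smul_right, norm_smul, norm_neg, Real.norm_of_nonneg ht01.1.le] at hle
    have h5 := mul_neg_of_pos_of_neg ht01.1 (ht i)
    have h6 : t * ((g i (x + t • (z - x)) - g i x) / t) = g i (x + t • (z - x)) - g i x :=
      mul_div_cancel₀ _ ht01.1.ne'
    rw [mul_add, mul_add, h6] at h5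
    nlinarith
end

section
/- For every ℓ > 0, the function w_ℓ is continuous on S. -/
open scoped RealInnerProductSpace

theorem meritW_aux_bound {E : Type*} [NormedAddCommGroup E] [NormedSpace ℝ E] (g : E → ℝ)
    (hg : ConvexOn ℝ Set.univ g) (x0 : E) (M : ℝ)
    (hM : ∀ z ∈ Metric.closedBall x0 1, |g z| ≤ M) (y : E) (hy : 1 ≤ ‖y - x0‖) :
    -(2 * M * ‖y - x0‖) ≤ g y := by
  set r := ‖y - x0‖ with hr
  have hr0 : 0 < r := by linarith
  have hx := hM x0 (by simp)
  have hz := hM (x0 + r⁻¹ • (y - x0)) (by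
    simp only [Metric.mem_closedBall, dist_eq_norm, add_sub_cancel_left, norm_smul, norm_inv,
      Real.norm_eq_abs, abs_of_pos hr0]
    rw [← hr, inv_mul_cancel₀ hr0.ne'])
  have h1 : 0 ≤ 1 - r⁻¹ := by have := inv_le_one_of_one_le₀ hy; linarith
  have h1' : 0 ≤ r⁻¹ := by positivity
  have hc := hg.2 (Set.mem_univ x0) (Set.mem_univ y) h1 h1' (by ring)
  have he : (1 - r⁻¹) • x0 + r⁻¹ • y = x0 + r⁻¹ • (y - x0) := by
    module
  rw [he] at hc
  simp only [smul_eq_mul] at hc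
  rw [abs_le] at hx hz
  have h2 : r * g (x0 + r⁻¹ • (y - x0)) ≤ (r - 1) * g x0 + g y := by
    have := mul_le_mul_of_nonneg_left hc hr0.le
    calc _ ≤ _ := this
      _ = _ := by field_simp
  nlinarith

theorem meritW_continuousOn {n m : ℕ} (hm : 0 < m)
    (S : Set (EuclideanSpace ℝ (Fin n))) (hS : S.Nonempty)
    (hSclosed : IsClosed S) (hSconv : Convex ℝ S)
    (f g : Fin m → EuclideanSpace ℝ (Fin n) → ℝ)
    (Gf : Fin m → EuclideanSpace ℝ (Fin n) → EuclideanSpace ℝ (Fin n))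
    (hGf : ∀ i y, HasGradientAt (f i) (Gf i y) y)
    (hGfc : ∀ i, Continuous (Gf i))
    (hgconv : ∀ i, ConvexOn ℝ Set.univ (g i))
    (ℓ : ℝ) (hℓ : 0 < ℓ) :
    ContinuousOn (meritW ℓ S Gf g) S := by
  have hgc : ∀ i, Continuous (g i) := fun i =>
    continuousOn_univ.1 ((hgconv i).continuousOn isOpen_univ)
  haveI : Nonempty (Fin m) := ⟨⟨0, hm⟩⟩
  set φ : EuclideanSpace ℝ (Fin n) → EuclideanSpace ℝ (Fin n) → ℝ := fun x y =>
    ⨅ i, (⟪Gf i x, x - y⟫ + g i x - g i y - ℓ / 2 * ‖x - y‖ ^ 2) with hφ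
  have hφc : Continuous (Function.uncurry φ) := by
    simp only [hφ, Function.uncurry_def, ← Finset.inf'_univ_eq_ciInf]
    apply Continuous.finset_inf'_apply
    intro i _
    have := hgc i
    have := hGfc i
    fun_prop
  have hφxx : ∀ x, φ x x = 0 := by intro x; simp [hφ]
  intro x0 hx0
  let i0 : Fin m := ⟨0, hm⟩
  obtain ⟨M, hM⟩ := (isCompact_closedBall x0 1).exists_bound_of_continuousOn (hgc i0).continuousOn
  obtain ⟨C, hC⟩ := (isCompact_closedBall x0 1).exists_bound_of_continuousOn (hGfc i0).continuousOn
  have hM0 : 0 ≤ M := (norm_nonneg _).trans (hM x0 (by simp))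
  have hC0 : 0 ≤ C := (norm_nonneg _).trans (hC x0 (by simp))
  set R := 2 + (2 * C + 3 * M) * 8 / ℓ with hR
  have hR2 : 2 ≤ R := by
    have : 0 ≤ (2 * C + 3 * M) * 8 / ℓ := by positivity
    linarith
  have key : ∀ x ∈ Metric.closedBall x0 1, ∀ y, R ≤ ‖y - x0‖ → φ x y ≤ 0 := by
    intro x hx y hy
    have h1 : φ x y ≤ ⟪Gf i0 x, x - y⟫ + g i0 x - g i0 y - ℓ / 2 * ‖x - y‖ ^ 2 :=
      ciInf_le (Set.finite_range _).bddBelow i0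
    have h2 := meritW_aux_bound (g i0) (hgconv i0) x0 M hM y (by linarith)
    have h3 := (abs_le.1 (hM x hx)).2
    have h4 := real_inner_le_norm (Gf i0 x) (x - y)
    have hxx : ‖x - x0‖ ≤ 1 := by simpa [dist_eq_norm] using hx
    have h5 : ‖x - y‖ ≤ 1 + ‖y - x0‖ := by
      have := norm_sub_le (x - x0) (y - x0)
      rw [sub_sub_sub_cancel_right] at this
      linarith
    have h6 : ‖y - x0‖ - 1 ≤ ‖x - y‖ := by
      have := norm_sub_le (x - x0) (x - y)
      rw [sub_sub_sub_cancel_left] at this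
      linarith
    set r := ‖y - x0‖
    have h7 : ‖Gf i0 x‖ * ‖x - y‖ ≤ C * (2 * r) :=
      mul_le_mul (hC x hx) (by linarith) (norm_nonneg _) hC0
    have h8 : (r / 2) ^ 2 ≤ ‖x - y‖ ^ 2 := pow_le_pow_left₀ (by linarith) (by linarith) 2
    have h9 : ℓ / 2 * (r / 2) ^ 2 ≤ ℓ / 2 * ‖x - y‖ ^ 2 := by gcongr
    have h10 : (2 * C + 3 * M) * 8 ≤ ℓ * r := by
      have : (2 * C + 3 * M) * 8 / ℓ ≤ r := by linarith
      rw [div_le_iff₀ hℓ] at this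
      linarith
    have h11 : (2 * C + 3 * M) * 8 * r ≤ ℓ * r * r := by gcongr
    nlinarith
  set K := S ∩ Metric.closedBall x0 R with hK
  have hKc : IsCompact K := (isCompact_closedBall x0 R).inter_left hSclosed
  have hcont : Continuous fun x => sSup (φ x '' K) := hKc.continuous_sSup hφc
  refine (hcont.continuousAt (x := x0)).continuousWithinAt.congr_of_eventuallyEq_of_mem ?_ hx0
  filter_upwards [self_mem_nhdsWithin,
    mem_nhdsWithin_of_mem_nhds (Metric.closedBall_mem_nhds x0 one_pos)] with x hxS hx
  have hxK : x ∈ K := ⟨hxS, Metric.closedBall_subset_closedBall (by linarith) hx⟩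
  have hb : BddAbove (φ x '' K) := (hKc.image (hφc.comp (Continuous.prodMk_right x))).bddAbove
  have h0 : 0 ≤ sSup (φ x '' K) := by
    rw [← hφxx x]; exact le_csSup hb ⟨x, hxK, rfl⟩
  have hub : ∀ y ∈ S, φ x y ≤ sSup (φ x '' K) := by
    intro y hy
    by_cases h : ‖y - x0‖ ≤ R
    · exact le_csSup hb ⟨y, ⟨hy, by simpa [dist_eq_norm] using h⟩, rfl⟩
    · exact (key x hx y (not_le.1 h).le).trans h0
  change sSup (φ x '' S) = sSup (φ x '' K)
  apply le_antisymm
  · exact csSup_le (hS.image _) (by rintro _ ⟨y, hy, rfl⟩; exact hub y hy)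
  · exact csSup_le_csSup ⟨_, by rintro _ ⟨y, hy, rfl⟩; exact hub y hy⟩ ⟨_, x, hxK, rfl⟩
      (Set.image_mono Set.inter_subset_left)
end

section
/- Suppose each F_i is convex and let 0 < ℓ ≤ r. Then u_r(x) ≤ u_ℓ(x) ≤ (r/ℓ) u_r(x) for every x ∈ S. -/
lemma meritU_bdd_aux {n m : ℕ} (hm : 0 < m)
    (S : Set (EuclideanSpace ℝ (Fin n)))
    (F : Fin m → EuclideanSpace ℝ (Fin n) → ℝ)
    (hFconv : ∀ i, ConvexOn ℝ Set.univ (F i))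
    (ℓ : ℝ) (hℓ : 0 < ℓ) (x : EuclideanSpace ℝ (Fin n)) :
    BddAbove ((fun y => ⨅ i, (F i x - F i y - ℓ / 2 * ‖x - y‖ ^ 2)) '' S) := by
  let i0 : Fin m := ⟨0, hm⟩
  have hc : ContinuousOn (F i0) Set.univ := (hFconv i0).continuousOn isOpen_univ
  obtain ⟨M, hM⟩ := (isCompact_closedBall x 1).bddAbove_image (hc.mono (Set.subset_univ _))
  set C := M - F i0 x with hC
  refine ⟨C + C ^ 2 / (2 * ℓ), ?_⟩
  rintro _ ⟨y, -, rfl⟩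
  refine (ciInf_le (Set.finite_range _).bddBelow i0).trans ?_
  set d := ‖x - y‖ with hd
  have hd0 : 0 ≤ d := norm_nonneg _
  have hpos : 0 < 1 + d := by linarith
  have hz : F i0 (x + (1 + d)⁻¹ • (x - y)) ≤ M := by
    apply hM
    refine ⟨_, ?_, rfl⟩
    rw [mem_closedBall_iff_norm, add_sub_cancel_left, norm_smul, Real.norm_of_nonneg (by positivity),
      inv_mul_le_iff₀ hpos]
    linarith
  have h2 : 0 < 2 + d := by linarith
  have key := (hFconv i0).2 (Set.mem_univ (x + (1 + d)⁻¹ • (x - y))) (Set.mem_univ y)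
    (show 0 ≤ (1 + d) / (2 + d) by positivity) (show 0 ≤ 1 / (2 + d) by positivity)
    (by field_simp; ring)
  have hx : ((1 + d) / (2 + d)) • (x + (1 + d)⁻¹ • (x - y)) + (1 / (2 + d)) • y = x := by
    have e1 : (1 + d) / (2 + d) * (1 + d)⁻¹ = 1 / (2 + d) := by field_simp
    have e2 : (1 + d) / (2 + d) = 1 - 1 / (2 + d) := by field_simp; ring
    rw [smul_add, smul_smul, e1, e2]
    module
  rw [hx, smul_eq_mul, smul_eq_mul] at key
  have key2 : (2 + d) * F i0 x ≤ (1 + d) * M + F i0 y := by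
    have := mul_le_mul_of_nonneg_left key h2.le
    have e : (2 + d) * ((1 + d) / (2 + d) * F i0 (x + (1 + d)⁻¹ • (x - y)) + 1 / (2 + d) * F i0 y)
      = (1 + d) * F i0 (x + (1 + d)⁻¹ • (x - y)) + F i0 y := by field_simp
    rw [e] at this
    have := mul_le_mul_of_nonneg_left hz hpos.le
    linarith
  have h3 : F i0 x - F i0 y ≤ C * (1 + d) := by rw [hC]; linarith
  have h4 : C ^ 2 / (2 * ℓ) - C * d + ℓ / 2 * d ^ 2 = (C - ℓ * d) ^ 2 / (2 * ℓ) := by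
    field_simp
    ring
  have h5 : 0 ≤ (C - ℓ * d) ^ 2 / (2 * ℓ) := by positivity
  linarith



/-- if each `F i` is convex and `0 < ℓ ≤ r`, then
`u_r(x) ≤ u_ℓ(x) ≤ (r/ℓ) u_r(x)` for every `x ∈ S`. -/
theorem meritU_parameter_comparison {n m : ℕ} (hm : 0 < m)
    (S : Set (EuclideanSpace ℝ (Fin n))) (hS : S.Nonempty)
    (hSclosed : IsClosed S) (hSconv : Convex ℝ S)
    (F : Fin m → EuclideanSpace ℝ (Fin n) → ℝ)
    (hFconv : ∀ i, ConvexOn ℝ Set.univ (F i))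
    (ℓ r : ℝ) (hℓ : 0 < ℓ) (hℓr : ℓ ≤ r) :
    ∀ x ∈ S, meritU r S F x ≤ meritU ℓ S F x ∧
      meritU ℓ S F x ≤ r / ℓ * meritU r S F x := by
  intro x hx
  have hr : 0 < r := hℓ.trans_le hℓr
  have : Nonempty (Fin m) := ⟨⟨0, hm⟩⟩
  have bl := meritU_bdd_aux hm S F hFconv ℓ hℓ x
  have br := meritU_bdd_aux hm S F hFconv r hr x
  constructor
  · refine csSup_le (hS.image _) ?_
    rintro _ ⟨y, hy, rfl⟩
    refine le_trans ?_ (le_csSup bl ⟨y, hy, rfl⟩)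
    refine ciInf_mono (Set.finite_range _).bddBelow fun i => ?_
    have : ℓ / 2 * ‖x - y‖ ^ 2 ≤ r / 2 * ‖x - y‖ ^ 2 := by gcongr
    linarith
  · refine csSup_le (hS.image _) ?_
    rintro _ ⟨y, hy, rfl⟩
    have ht0 : 0 < ℓ / r := by positivity
    have ht1 : ℓ / r ≤ 1 := (div_le_one hr).2 hℓr
    set t := ℓ / r with ht
    have hrt : r * t = ℓ := by rw [ht]; field_simp
    have hinv : r / ℓ * t = 1 := by rw [ht]; field_simp
    have hz : (1 - t) • x + t • y ∈ S := hSconv hx hy (by linarith) ht0.le (by ring)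
    have h1 : t * (⨅ i, (F i x - F i y - ℓ / 2 * ‖x - y‖ ^ 2)) ≤ meritU r S F x := by
      refine le_trans ?_ (le_csSup br ⟨_, hz, rfl⟩)
      refine le_ciInf fun i => ?_
      have h2 : (⨅ i, (F i x - F i y - ℓ / 2 * ‖x - y‖ ^ 2)) ≤
          F i x - F i y - ℓ / 2 * ‖x - y‖ ^ 2 := ciInf_le (Set.finite_range _).bddBelow i
      refine (mul_le_mul_of_nonneg_left h2 ht0.le).trans ?_
      have key := (hFconv i).2 (Set.mem_univ x) (Set.mem_univ y)
        (show 0 ≤ 1 - t by linarith) ht0.le (by ring)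
      rw [smul_eq_mul, smul_eq_mul] at key
      have e : x - ((1 - t) • x + t • y) = t • (x - y) := by module
      rw [e, norm_smul, Real.norm_of_nonneg ht0.le]
      have e2 : r / 2 * (t * ‖x - y‖) ^ 2 = t * (ℓ / 2 * ‖x - y‖ ^ 2) := by
        rw [← hrt]; ring
      rw [e2]
      linarith
    have h3 := mul_le_mul_of_nonneg_left h1 (show 0 ≤ r / ℓ by positivity)
    rw [← mul_assoc, hinv, one_mul] at h3
    exact h3
end

section
/- Let ℓ > 0 and suppose that for every i = 1,…,m at least one of the following holds: (a) f_i is μ_i-convex for some μ_i ∈ ℝ, F_i is σ_i-convex for some σ_i > 0, and ρ_i := σ_i + μ_i > 0; or (b) ∇f_i is L_i-Lipschitz continuous for some L_i > 0, F_i is σ_i-convex for some σ_i > 0, and ρ_i := σ_i − L_i > 0. Set ρ = min_{i=1,…,m} ρ_i and define κ(ρ) = (ρ − ℓ)/2 if ℓ < ρ/2 and κ(ρ) = ρ²/(8ℓ) otherwise. Then w_ℓ(x) ≥ κ(ρ) · inf_{x*∈X*} ‖x − x*‖² for every x ∈ S, where X* is the set of Pareto optimal points of min_{x∈S} F(x).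 -/
open scoped RealInnerProductSpace

/-- `σ`-convexity: `h(αa + (1-α)b) ≤ αh(a) + (1-α)h(b) - (α(1-α)σ/2)‖a - b‖²`. -/
def SigmaConvex {n : ℕ} (σ : ℝ) (h : EuclideanSpace ℝ (Fin n) → ℝ) : Prop :=
  ∀ a b : EuclideanSpace ℝ (Fin n), ∀ α ∈ Set.Icc (0 : ℝ) 1,
    h (α • a + (1 - α) • b) ≤
      α * h a + (1 - α) * h b - α * (1 - α) * σ / 2 * ‖a - b‖ ^ 2

theorem aux_sep {m : ℕ} {E : Type*} [AddCommGroup E] [Module ℝ E]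
    (S : Set E) (hS : S.Nonempty) (hSc : Convex ℝ S) (H : Fin m → E → ℝ)
    (hH : ∀ i, ConcaveOn ℝ S (H i)) (w : ℝ) (hw : ∀ y ∈ S, ∃ i, H i y ≤ w) :
    ∃ p : Fin m → ℝ, (∀ i, 0 ≤ p i) ∧ ∑ i, p i = 1 ∧ ∀ y ∈ S, ∑ i, p i * H i y ≤ w := by
  set U : Set (Fin m → ℝ) := {v | ∀ i, w < v i} with hU
  set A : Set (Fin m → ℝ) := {v | ∃ y ∈ S, ∀ i, v i ≤ H i y} with hA
  have hUo : IsOpen U := by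
    have : U = Set.pi Set.univ (fun _ => Set.Ioi w) := by ext; simp [hU]
    rw [this]
    exact isOpen_set_pi Set.finite_univ (fun _ _ => isOpen_Ioi)
  have hUc : Convex ℝ U := by
    have : U = Set.pi Set.univ (fun _ => Set.Ioi w) := by ext; simp [hU]
    rw [this]
    exact convex_pi (fun _ _ => convex_Ioi w)
  have hAc : Convex ℝ A := by
    rintro u ⟨y, hy, hu⟩ v ⟨z, hz, hv⟩ a b ha hb hab
    refine ⟨a • y + b • z, hSc hy hz ha hb hab, fun i => ?_⟩
    have h := (hH i).2 hy hz ha hb hab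
    have h1 := mul_le_mul_of_nonneg_left (hu i) ha
    have h2 := mul_le_mul_of_nonneg_left (hv i) hb
    simp only [smul_eq_mul, Pi.add_apply, Pi.smul_apply] at h ⊢
    linarith
  have hdis : Disjoint U A := by
    rw [Set.disjoint_left]
    rintro v hv ⟨y, hy, h⟩
    obtain ⟨i, hi⟩ := hw y hy
    have := hv i
    have := h i
    linarith
  obtain ⟨φ, c, hφU, hφA⟩ := geometric_hahn_banach_open hUc hUo hAc hdis
  have hφ : ∀ v, φ v = ∑ i, v i * φ (Pi.single i 1) := by
    intro v
    have h := LinearMap.pi_apply_eq_sum_univ φ.toLinearMap v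
    simp only [smul_eq_mul] at h
    refine h.trans (Finset.sum_congr rfl fun i _ => ?_)
    have e : (fun j => if i = j then (1:ℝ) else 0) = Pi.single i 1 := by
      ext j
      simp [Pi.single_apply, eq_comm]
    rw [e]
    rfl
  obtain ⟨y0, hy0⟩ := hS
  set q : Fin m → ℝ := fun i => - φ (Pi.single i 1) with hq
  have hq0 : ∀ i, 0 ≤ q i := by
    intro i
    by_contra hneg
    push Not at hneg
    have hlt : 0 < φ (Pi.single i 1) := by simp only [hq] at hneg; linarith
    set s := (|φ (fun j => H j y0) - c| + 1) / φ (Pi.single i 1) with hs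
    have hspos : 0 ≤ s := by positivity
    have hmem : (fun j => H j y0) - s • (Pi.single i (1:ℝ)) ∈ A := by
      refine ⟨y0, hy0, fun j => ?_⟩
      have : 0 ≤ (Pi.single i (1:ℝ) : Fin m → ℝ) j := by
        by_cases h : j = i
        · subst h; simp
        · simp [h]
      have := mul_nonneg hspos this
      simp only [Pi.sub_apply, Pi.smul_apply, smul_eq_mul]
      linarith
    have h := hφA _ hmem
    rw [map_sub, map_smul, smul_eq_mul, hs, div_mul_cancel₀ _ hlt.ne'] at h
    have := le_abs_self (φ (fun j => H j y0) - c)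
    linarith
  have hφq : ∀ v, φ v = - ∑ i, q i * v i := by
    intro v
    rw [hφ, ← Finset.sum_neg_distrib]
    exact Finset.sum_congr rfl (fun i _ => by simp only [hq]; ring)
  have hQ : 0 < ∑ i, q i := by
    rcases (Finset.sum_nonneg (fun i _ => hq0 i)).lt_or_eq with h | h
    · exact h
    · exfalso
      have hz := (Finset.sum_eq_zero_iff_of_nonneg (fun i _ => hq0 i)).1 h.symm
      have h1 := hφU (fun _ => w + 1) (fun i => by simp)
      have h2 := hφA (fun j => H j y0) ⟨y0, hy0, fun _ => le_rfl⟩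
      rw [hφq] at h1 h2
      rw [Finset.sum_eq_zero (fun i hi => by rw [hz i hi, zero_mul])] at h1 h2
      linarith
  refine ⟨fun i => q i / ∑ j, q j, fun i => div_nonneg (hq0 i) hQ.le, ?_, ?_⟩
  · rw [← Finset.sum_div, div_self hQ.ne']
  · intro y hy
    have h2 := hφA (fun j => H j y) ⟨y, hy, fun _ => le_rfl⟩
    rw [hφq] at h2
    have key : ∑ i, q i * H i y ≤ w * ∑ i, q i := by
      refine le_of_forall_pos_le_add (fun ε hε => ?_)
      have h1 := hφU (fun _ => w + ε / ∑ i, q i) (fun i => by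
        have : 0 < ε / ∑ i, q i := by positivity
        linarith)
      rw [hφq, ← Finset.sum_mul, mul_add, mul_div_cancel₀ _ hQ.ne'] at h1
      linarith
    have : ∑ i, q i / (∑ j, q j) * H i y = (∑ i, q i * H i y) / ∑ j, q j := by
      rw [Finset.sum_div]
      exact Finset.sum_congr rfl (fun i _ => by ring)
    rw [this, div_le_iff₀ hQ]
    exact key

theorem aux_growth {n : ℕ} {σ : ℝ} {h : EuclideanSpace ℝ (Fin n) → ℝ}
    (hh : SigmaConvex σ h) (hc : Continuous h) (x : EuclideanSpace ℝ (Fin n)) :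
    ∃ C : ℝ, ∀ y, h x - C * ‖y - x‖ + σ / 2 * ‖y - x‖ ^ 2 ≤ h y := by
  obtain ⟨M, hM⟩ := (isCompact_closedBall x 1).bddAbove_image hc.continuousOn
  refine ⟨M - h x - σ / 2, fun y => ?_⟩
  rcases eq_or_ne y x with rfl | hne
  · simp
  have hr : 0 < ‖y - x‖ := norm_pos_iff.2 (sub_ne_zero.2 hne)
  set r := ‖y - x‖ with hrdef
  set z := x - r⁻¹ • (y - x) with hz
  have hzM : h z ≤ M := by
    apply hM
    refine ⟨z, ?_, rfl⟩
    rw [Metric.mem_closedBall, dist_eq_norm, hz]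
    rw [sub_sub_cancel_left, norm_neg, norm_smul, norm_inv, norm_norm, inv_mul_cancel₀ hr.ne']
  have hα : (1 + r)⁻¹ ∈ Set.Icc (0:ℝ) 1 :=
    ⟨by positivity, inv_le_one_of_one_le₀ (by linarith)⟩
  have h1 := hh y z _ hα
  have e1 : (1 + r)⁻¹ • y + (1 - (1 + r)⁻¹) • z = x := by
    have : (1 - (1 + r)⁻¹) * r⁻¹ = (1 + r)⁻¹ := by field_simp; ring
    rw [hz, smul_sub, smul_smul, this]
    module
  have e2 : ‖y - z‖ = 1 + r := by
    have : y - z = (1 + r⁻¹) • (y - x) := by rw [hz]; module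
    rw [this, norm_smul, Real.norm_of_nonneg (by positivity), ← hrdef]
    field_simp; ring
  rw [e1, e2] at h1
  have e3 : (1 + r)⁻¹ * h y + (1 - (1 + r)⁻¹) * h z - (1 + r)⁻¹ * (1 - (1 + r)⁻¹) * σ / 2 * (1 + r) ^ 2
     = (h y + r * h z - r * (1 + r) * σ / 2) / (1 + r) := by field_simp; ring
  rw [e3, le_div_iff₀ (by positivity)] at h1
  have := mul_le_mul_of_nonneg_left hzM hr.le
  nlinarith

theorem aux_first {n : ℕ} {μ : ℝ} {f : EuclideanSpace ℝ (Fin n) → ℝ}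
    (hf : SigmaConvex μ f) {G x : EuclideanSpace ℝ (Fin n)} (hG : HasGradientAt f G x)
    (y : EuclideanSpace ℝ (Fin n)) :
    f x - f y + μ / 2 * ‖x - y‖ ^ 2 ≤ ⟪G, x - y⟫ := by
  have hline : HasDerivAt (fun t : ℝ => x + t • (y - x)) (y - x) 0 := by
    simpa using ((hasDerivAt_id (0:ℝ)).smul_const (y - x)).const_add x
  have hG' : HasFDerivAt f (InnerProductSpace.toDual ℝ _ G) (x + (0:ℝ) • (y - x)) := by
    simpa using hG.hasFDerivAt
  have hd := hG'.comp_hasDerivAt (0:ℝ) hline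
  have ht := hd.tendsto_slope_zero_right
  have hb : Filter.Tendsto (fun t : ℝ => f y - f x - (1 - t) * μ / 2 * ‖x - y‖ ^ 2)
      (nhdsWithin 0 (Set.Ioi 0)) (nhds (f y - f x - (1 - 0) * μ / 2 * ‖x - y‖ ^ 2)) := by
    apply Filter.Tendsto.mono_left _ nhdsWithin_le_nhds
    exact Continuous.tendsto (by fun_prop) 0
  have hle := le_of_tendsto_of_tendsto ht hb (by
    filter_upwards [Ioo_mem_nhdsGT (zero_lt_one (α := ℝ))] with t htt
    have h1 := hf y x t ⟨htt.1.le, htt.2.le⟩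
    have e : t • y + (1 - t) • x = x + t • (y - x) := by module
    rw [e, norm_sub_rev] at h1
    simp only [Function.comp, zero_add, zero_smul, add_zero, smul_eq_mul]
    rw [inv_mul_le_iff₀ htt.1]
    nlinarith)
  simp only [InnerProductSpace.toDual_apply_apply] at hle
  have : ⟪G, x - y⟫ = - ⟪G, y - x⟫ := by rw [← inner_neg_right, neg_sub]
  rw [this]
  linarith

theorem aux_descent {n : ℕ} {L : ℝ} {f : EuclideanSpace ℝ (Fin n) → ℝ}
    {G : EuclideanSpace ℝ (Fin n) → EuclideanSpace ℝ (Fin n)}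
    (hG : ∀ y, HasGradientAt f (G y) y)
    (hL : ∀ a b, ‖G a - G b‖ ≤ L * ‖a - b‖)
    (x y : EuclideanSpace ℝ (Fin n)) :
    f x - f y + (-L) / 2 * ‖x - y‖ ^ 2 ≤ ⟪G x, x - y⟫ := by
  have hd : ∀ t : ℝ, HasDerivAt (fun t : ℝ => f (x + t • (y - x)) - t * ⟪G x, y - x⟫
      + L / 2 * ‖y - x‖ ^ 2 * t ^ 2)
      (⟪G (x + t • (y - x)), y - x⟫ - ⟪G x, y - x⟫ + L * ‖y - x‖ ^ 2 * t) t := by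
    intro t
    have hline : HasDerivAt (fun t : ℝ => x + t • (y - x)) (y - x) t := by
      simpa using ((hasDerivAt_id t).smul_const (y - x)).const_add x
    have h1 := (hG (x + t • (y - x))).hasFDerivAt.comp_hasDerivAt t hline
    have h2 := (h1.sub ((hasDerivAt_id t).mul_const ⟪G x, y - x⟫)).add
      ((hasDerivAt_pow 2 t).const_mul (L / 2 * ‖y - x‖ ^ 2))
    refine h2.congr_deriv ?_
    simp only [InnerProductSpace.toDual_apply_apply]
    push_cast
    ring
  have hmono : MonotoneOn (fun t : ℝ => f (x + t • (y - x)) - t * ⟪G x, y - x⟫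
      + L / 2 * ‖y - x‖ ^ 2 * t ^ 2) (Set.Icc 0 1) := by
    apply monotoneOn_of_deriv_nonneg (convex_Icc 0 1)
    · exact fun t _ => (hd t).continuousAt.continuousWithinAt
    · exact fun t _ => (hd t).differentiableAt.differentiableWithinAt
    · intro t ht
      rw [interior_Icc] at ht
      rw [(hd t).deriv, ← inner_sub_left]
      have h1 := abs_real_inner_le_norm (G (x + t • (y - x)) - G x) (y - x)
      have h2 := hL (x + t • (y - x)) x
      rw [add_sub_cancel_left, norm_smul, Real.norm_of_nonneg ht.1.le] at h2
      have h3 := mul_le_mul_of_nonneg_right h2 (norm_nonneg (y - x))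
      have h4 := neg_abs_le ⟪G (x + t • (y - x)) - G x, y - x⟫
      nlinarith
  have h := hmono (Set.left_mem_Icc.2 zero_le_one) (Set.right_mem_Icc.2 zero_le_one) zero_le_one
  simp only [zero_smul, add_zero, one_smul, add_sub_cancel] at h
  have : ⟪G x, x - y⟫ = - ⟪G x, y - x⟫ := by rw [← inner_neg_right, neg_sub]
  rw [this, norm_sub_rev]
  nlinarith

theorem aux_min {n : ℕ} {σ : ℝ} {h : EuclideanSpace ℝ (Fin n) → ℝ}
    (hh : SigmaConvex σ h) {S : Set (EuclideanSpace ℝ (Fin n))} (hS : Convex ℝ S)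
    {z : EuclideanSpace ℝ (Fin n)} (hz : z ∈ S) (hmin : ∀ y ∈ S, h z ≤ h y)
    {x : EuclideanSpace ℝ (Fin n)} (hx : x ∈ S) :
    σ / 2 * ‖x - z‖ ^ 2 ≤ h x - h z := by
  have hb : Filter.Tendsto (fun t : ℝ => (1 - t) * (σ / 2 * ‖x - z‖ ^ 2))
      (nhdsWithin 0 (Set.Ioi 0)) (nhds ((1 - 0) * (σ / 2 * ‖x - z‖ ^ 2))) := by
    apply Filter.Tendsto.mono_left _ nhdsWithin_le_nhds
    exact Continuous.tendsto (by fun_prop) 0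
  have := le_of_tendsto hb (b := h x - h z) (by
    filter_upwards [Ioo_mem_nhdsGT (zero_lt_one (α := ℝ))] with t ht
    have h1 := hh x z t ⟨ht.1.le, ht.2.le⟩
    have h2 := hmin _ (hS hx hz ht.1.le (sub_nonneg.2 ht.2.le) (by ring : t + (1 - t) = 1))
    have h3 : t * ((1 - t) * (σ / 2 * ‖x - z‖ ^ 2)) ≤ t * (h x - h z) := by nlinarith
    exact le_of_mul_le_mul_left h3 ht.1)
  linarith

theorem aux_exists {n : ℕ} {σ : ℝ} (hσ : 0 < σ) {h : EuclideanSpace ℝ (Fin n) → ℝ}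
    (hh : SigmaConvex σ h) (hc : Continuous h) {S : Set (EuclideanSpace ℝ (Fin n))}
    (hS : IsClosed S) {x : EuclideanSpace ℝ (Fin n)} (hx : x ∈ S) :
    ∃ z ∈ S, ∀ y ∈ S, h z ≤ h y := by
  obtain ⟨C, hC⟩ := aux_growth hh hc x
  have := hc.continuousOn.exists_isMinOn' hS hx (by
    have hev : ∀ᶠ y in Filter.cocompact (EuclideanSpace ℝ (Fin n)), h x ≤ h y := by
      have hco : (Metric.closedBall x (2 * |C| / σ))ᶜ ∈
          Filter.cocompact (EuclideanSpace ℝ (Fin n)) :=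
        (isCompact_closedBall _ _).compl_mem_cocompact
      filter_upwards [hco] with y hy
      rw [Set.mem_compl_iff, Metric.mem_closedBall, not_le, dist_eq_norm, div_lt_iff₀ hσ] at hy
      have h1 := hC y
      have h2 := le_abs_self C
      have h3 := norm_nonneg (y - x)
      nlinarith
    exact hev.filter_mono inf_le_left)
  obtain ⟨z, hz, hm⟩ := this
  exact ⟨z, hz, fun y hy => hm hy⟩

/-- under strong-convexity-type assumptions, `w_ℓ` provides a global error
bound: `w_ℓ(x) ≥ κ(ρ) inf_{x* ∈ X*} ‖x - x*‖²` for all `x ∈ S`, where `X*` is the Pareto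
optimal set, `ρ = min_i ρ_i`, and `κ(ρ) = (ρ - ℓ)/2` if `ℓ < ρ/2`, `κ(ρ) = ρ²/(8ℓ)`
otherwise. -/
theorem meritW_error_bound {n m : ℕ} (hm : 0 < m)
    (S : Set (EuclideanSpace ℝ (Fin n))) (hS : S.Nonempty)
    (hSclosed : IsClosed S) (hSconv : Convex ℝ S)
    (f g : Fin m → EuclideanSpace ℝ (Fin n) → ℝ)
    (Gf : Fin m → EuclideanSpace ℝ (Fin n) → EuclideanSpace ℝ (Fin n))
    (hGf : ∀ i y, HasGradientAt (f i) (Gf i y) y)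
    (hGfc : ∀ i, Continuous (Gf i))
    (hgconv : ∀ i, ConvexOn ℝ Set.univ (g i))
    (ℓ : ℝ) (hℓ : 0 < ℓ)
    (σ ρ : Fin m → ℝ) (hσ : ∀ i, 0 < σ i)
    (hcases : ∀ i,
      (∃ μ : ℝ, SigmaConvex μ (f i) ∧
        SigmaConvex (σ i) (fun y => f i y + g i y) ∧ ρ i = σ i + μ ∧ 0 < ρ i) ∨
      (∃ L : ℝ, 0 < L ∧
        (∀ a b : EuclideanSpace ℝ (Fin n), ‖Gf i a - Gf i b‖ ≤ L * ‖a - b‖) ∧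
        SigmaConvex (σ i) (fun y => f i y + g i y) ∧ ρ i = σ i - L ∧ 0 < ρ i)) :
    ∀ x ∈ S,
      (if ℓ < (⨅ i, ρ i) / 2 then ((⨅ i, ρ i) - ℓ) / 2
        else (⨅ i, ρ i) ^ 2 / (8 * ℓ)) *
        sInf ((fun xs => ‖x - xs‖ ^ 2) ''
          {xs | xs ∈ S ∧ ¬ ∃ z ∈ S, (∀ i, f i z + g i z ≤ f i xs + g i xs) ∧
            ∃ j, f j z + g j z < f j xs + g j xs}) ≤
      meritW ℓ S Gf g x := by
  intro x hx
  haveI : Nonempty (Fin m) := ⟨⟨0, hm⟩⟩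
  have hi : ∀ i, ∃ μ : ℝ, SigmaConvex (σ i) (fun y => f i y + g i y) ∧ ρ i = σ i + μ ∧ 0 < ρ i ∧
      ∀ y, f i x - f i y + μ / 2 * ‖x - y‖ ^ 2 ≤ ⟪Gf i x, x - y⟫ := by
    intro i
    rcases hcases i with ⟨μ, h1, h2, h3, h4⟩ | ⟨L, _, h1, h2, h3, h4⟩
    · exact ⟨μ, h2, h3, h4, fun y => aux_first h1 (hGf i x) y⟩
    · exact ⟨-L, h2, by rw [h3]; ring, h4, fun y => aux_descent (hGf i) h1 x y⟩
  choose μ hF hρ hρpos hlin using hi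
  have hgc : ∀ i, Continuous (g i) := fun i =>
    continuousOn_univ.1 ((hgconv i).continuousOn isOpen_univ)
  have hfc : ∀ i, Continuous (f i) := fun i =>
    continuous_iff_continuousAt.2 fun y => (hGf i y).hasFDerivAt.continuousAt
  have hg0 : ∀ i, SigmaConvex 0 (g i) := by
    intro i a b α hα
    have := (hgconv i).2 (Set.mem_univ a) (Set.mem_univ b) hα.1 (sub_nonneg.2 hα.2)
      (by ring : α + (1 - α) = 1)
    simpa using this
  set H : Fin m → EuclideanSpace ℝ (Fin n) → ℝ := fun i y =>
    ⟪Gf i x, x - y⟫ + g i x - g i y - ℓ / 2 * ‖x - y‖ ^ 2 with hH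
  have hbdd : BddAbove ((fun y => ⨅ i, H i y) '' S) := by
    obtain ⟨C, hC⟩ := aux_growth (hg0 ⟨0, hm⟩) (hgc ⟨0, hm⟩) x
    refine ⟨(‖Gf ⟨0, hm⟩ x‖ + C) ^ 2 / (2 * ℓ), ?_⟩
    rintro _ ⟨y, hy, rfl⟩
    refine (ciInf_le (Set.finite_range _).bddBelow ⟨0, hm⟩).trans ?_
    have h1 := hC y
    have h2 := real_inner_le_norm (Gf ⟨0, hm⟩ x) (x - y)
    rw [norm_sub_rev y x] at h1
    rw [le_div_iff₀ (by positivity)]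
    simp only [hH]
    have h3 : ⟪Gf ⟨0, hm⟩ x, x - y⟫ + g ⟨0, hm⟩ x - g ⟨0, hm⟩ y - ℓ / 2 * ‖x - y‖ ^ 2
      ≤ (‖Gf ⟨0, hm⟩ x‖ + C) * ‖x - y‖ - ℓ / 2 * ‖x - y‖ ^ 2 := by linarith
    have h4 := mul_le_mul_of_nonneg_right h3 (by positivity : 0 ≤ 2 * ℓ)
    nlinarith [sq_nonneg (‖Gf ⟨0, hm⟩ x‖ + C - ℓ * ‖x - y‖)]
  have hw : ∀ y ∈ S, ∃ i, H i y ≤ meritW ℓ S Gf g x := by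
    intro y hy
    obtain ⟨i, hi⟩ := exists_eq_ciInf_of_finite (f := fun i => H i y)
    exact ⟨i, hi.le.trans (le_csSup hbdd ⟨y, hy, rfl⟩)⟩
  have hconc : ∀ i, ConcaveOn ℝ S (H i) := by
    intro i
    refine ⟨hSconv, fun y hy z hz a b ha hb hab => ?_⟩
    have h1 := (hgconv i).2 (Set.mem_univ y) (Set.mem_univ z) ha hb hab
    have e : x - (a • y + b • z) = a • (x - y) + b • (x - z) := by
      have : x = (a + b) • x := by rw [hab, one_smul]
      nth_rewrite 1 [this]
      module
    have h2 : ‖a • (x - y) + b • (x - z)‖ ^ 2 ≤ a * ‖x - y‖ ^ 2 + b * ‖x - z‖ ^ 2 := by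
      have t1 := norm_add_le (a • (x - y)) (b • (x - z))
      rw [norm_smul, norm_smul, Real.norm_of_nonneg ha, Real.norm_of_nonneg hb] at t1
      have t2 := pow_le_pow_left₀ (norm_nonneg _) t1 2
      refine t2.trans ?_
      obtain rfl : b = 1 - a := by linarith
      nlinarith [mul_nonneg (mul_nonneg ha hb) (sq_nonneg (‖x - y‖ - ‖x - z‖))]
    simp only [hH, smul_eq_mul] at h1 ⊢
    rw [e, inner_add_right, real_inner_smul_right, real_inner_smul_right]
    have h3 := mul_le_mul_of_nonneg_left h2 (by positivity : 0 ≤ ℓ / 2)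
    have h4 : g i x = a * g i x + b * g i x := by rw [← add_mul, hab, one_mul]
    nlinarith
  obtain ⟨p, hp0, hp1, hp⟩ := aux_sep S ⟨x, hx⟩ hSconv H hconc _ hw
  -- the scalarized objective
  have hΦ : SigmaConvex (∑ i, p i * σ i) (fun y => ∑ i, p i * (f i y + g i y)) := by
    intro a b α hα
    calc _ ≤ ∑ i, p i * (α * (f i a + g i a) + (1 - α) * (f i b + g i b)
              - α * (1 - α) * σ i / 2 * ‖a - b‖ ^ 2) :=
            Finset.sum_le_sum fun i _ => mul_le_mul_of_nonneg_left (hF i a b α hα) (hp0 i)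
      _ = _ := by
            simp only [Finset.mul_sum, Finset.sum_mul, Finset.sum_div]
            rw [← Finset.sum_add_distrib, ← Finset.sum_sub_distrib]
            exact Finset.sum_congr rfl fun i _ => by ring
  have hΦc : Continuous (fun y => ∑ i, p i * (f i y + g i y)) := by fun_prop
  have hσpos : 0 < ∑ i, p i * σ i := by
    obtain ⟨i, _, hi⟩ : ∃ i ∈ Finset.univ, 0 < p i := by
      by_contra hcon
      push Not at hcon
      have := Finset.sum_nonpos hcon
      linarith
    exact Finset.sum_pos' (fun j _ => mul_nonneg (hp0 j) (hσ j).le)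
      ⟨i, Finset.mem_univ i, mul_pos hi (hσ i)⟩
  obtain ⟨z, hzS, hz⟩ := aux_exists hσpos hΦ hΦc hSclosed hx
  have hgap := aux_min hΦ hSconv hzS hz hx
  have hPar : z ∈ {xs | xs ∈ S ∧ ¬ ∃ z ∈ S, (∀ i, f i z + g i z ≤ f i xs + g i xs) ∧
            ∃ j, f j z + g j z < f j xs + g j xs} := by
    refine ⟨hzS, ?_⟩
    rintro ⟨u, huS, hu, j, hj⟩
    have h1 : ∑ i, p i * (f i u + g i u) ≤ ∑ i, p i * (f i z + g i z) :=
      Finset.sum_le_sum fun i _ => mul_le_mul_of_nonneg_left (hu i) (hp0 i)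
    have h2 := aux_min hΦ hSconv hzS hz huS
    have h3 : ‖u - z‖ ^ 2 ≤ 0 := by
      by_contra hcon
      push Not at hcon
      have := mul_pos (half_pos hσpos) hcon
      linarith
    have h4 : u = z := by
      have : ‖u - z‖ = 0 := by
        have := sq_nonneg ‖u - z‖
        exact pow_eq_zero_iff two_ne_zero |>.1 (le_antisymm h3 this)
      exact sub_eq_zero.1 (norm_eq_zero.1 this)
    subst h4
    exact lt_irrefl _ hj
  set R := ⨅ i, ρ i with hR
  have hRpos : 0 < R := by
    obtain ⟨i, hi⟩ := exists_eq_ciInf_of_finite (f := ρ)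
    rw [hR, ← hi]
    exact hρpos i
  have hRle : ∀ i, R ≤ ρ i := fun i => ciInf_le (Set.finite_range _).bddBelow i
  have hsum : R / 2 * ‖x - z‖ ^ 2 ≤ ∑ i, p i * (⟪Gf i x, x - z⟫ + g i x - g i z) := by
    have h1 : ∑ i, p i * (f i x - f i z + μ i / 2 * ‖x - z‖ ^ 2 + g i x - g i z)
        ≤ ∑ i, p i * (⟪Gf i x, x - z⟫ + g i x - g i z) :=
      Finset.sum_le_sum fun i _ => mul_le_mul_of_nonneg_left (by linarith [hlin i z]) (hp0 i)
    have h2 : ∑ i, p i * (f i x - f i z + μ i / 2 * ‖x - z‖ ^ 2 + g i x - g i z)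
        = (∑ i, p i * (f i x + g i x) - ∑ i, p i * (f i z + g i z))
          + (∑ i, p i * μ i) / 2 * ‖x - z‖ ^ 2 := by
      simp only [Finset.sum_mul, Finset.sum_div]
      rw [← Finset.sum_sub_distrib, ← Finset.sum_add_distrib]
      exact Finset.sum_congr rfl fun i _ => by ring
    have h3 : R ≤ ∑ i, p i * σ i + ∑ i, p i * μ i := by
      rw [← Finset.sum_add_distrib]
      calc R = ∑ i, p i * R := by rw [← Finset.sum_mul, hp1, one_mul]
        _ ≤ ∑ i, (p i * σ i + p i * μ i) := Finset.sum_le_sum fun i _ => by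
            rw [← mul_add, ← hρ i]
            exact mul_le_mul_of_nonneg_left (hRle i) (hp0 i)
    have h4 := mul_le_mul_of_nonneg_right h3 (sq_nonneg ‖x - z‖)
    linarith
  have hkey : ∀ t : ℝ, 0 ≤ t → t ≤ 1 →
      (t * R / 2 - ℓ / 2 * t ^ 2) * ‖x - z‖ ^ 2 ≤ meritW ℓ S Gf g x := by
    intro t ht0 ht1
    have hyS := hSconv hzS hx ht0 (sub_nonneg.2 ht1) (by ring : t + (1 - t) = 1)
    refine le_trans ?_ (hp _ hyS)
    have h1 : ∑ i, p i * (t * (⟪Gf i x, x - z⟫ + g i x - g i z) - ℓ / 2 * t ^ 2 * ‖x - z‖ ^ 2)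
        ≤ ∑ i, p i * H i (t • z + (1 - t) • x) := by
      refine Finset.sum_le_sum fun i _ => mul_le_mul_of_nonneg_left ?_ (hp0 i)
      have h2 := (hgconv i).2 (Set.mem_univ z) (Set.mem_univ x) ht0 (sub_nonneg.2 ht1)
        (by ring : t + (1 - t) = 1)
      have e : x - (t • z + (1 - t) • x) = t • (x - z) := by module
      simp only [hH, smul_eq_mul] at h2 ⊢
      rw [e, real_inner_smul_right, norm_smul, Real.norm_of_nonneg ht0]
      nlinarith
    refine le_trans ?_ h1
    have h5 : ∑ i, p i * (t * (⟪Gf i x, x - z⟫ + g i x - g i z) - ℓ / 2 * t ^ 2 * ‖x - z‖ ^ 2)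
        = t * ∑ i, p i * (⟪Gf i x, x - z⟫ + g i x - g i z)
          - (∑ i, p i) * (ℓ / 2 * t ^ 2 * ‖x - z‖ ^ 2) := by
      simp only [Finset.sum_mul, Finset.mul_sum]
      rw [← Finset.sum_sub_distrib]
      exact Finset.sum_congr rfl fun i _ => by ring
    rw [h5, hp1]
    have := mul_le_mul_of_nonneg_left hsum ht0
    linarith
  have hinf : sInf ((fun xs => ‖x - xs‖ ^ 2) ''
          {xs | xs ∈ S ∧ ¬ ∃ z ∈ S, (∀ i, f i z + g i z ≤ f i xs + g i xs) ∧
            ∃ j, f j z + g j z < f j xs + g j xs}) ≤ ‖x - z‖ ^ 2 := by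
    refine csInf_le ⟨0, ?_⟩ ⟨z, hPar, rfl⟩
    rintro _ ⟨u, _, rfl⟩
    positivity
  split_ifs with hc
  · refine (mul_le_mul_of_nonneg_left hinf (by linarith)).trans ?_
    refine le_trans (le_of_eq ?_) (hkey 1 zero_le_one le_rfl)
    ring
  · refine (mul_le_mul_of_nonneg_left hinf (by positivity)).trans ?_
    push Not at hc
    refine le_trans (le_of_eq ?_) (hkey (R / (2 * ℓ)) (by positivity)
      (by rw [div_le_one (by positivity)]; linarith))
    field_simp
    ring
end
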